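/- arXiv:2110.15947 — 7 statements merged into one kernel-verified Lean document; each statement's English description precedes it below -/
import Mathlib

section
/- The characteristic polynomial D(λ) = φ_l(λ) φ•_{l+1}(λ) − φ_{l+1}(λ) φ•_l(λ) has degree exactly 2l−1, with leading coefficient (∏_{k=1}^{l} (α_k α•_k)^{-1})·(α_l − α•_l) ≠ 0; consequently the discrete transmission eigenvalue problem has exactly 2l−1 eigenvalues counted with multiplicity. -/
open Polynomial

/-!
In a three-term recurrence `a φₙ₊₁ + b φₙ + c φₙ₋₁ = λ φₙ` only the term `λ φₙ` can produce the top
power of `λ`, so each step raises the degree by one and divides the leading coefficient by `a`.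
Hence `φ_l φ•_{l+1}` and `φ_{l+1} φ•_l` both have degree `(l - 1) + l`; their leading coefficients
lack the factor `α_l⁻¹`, respectively `α•_l⁻¹`, of the common product `∏ (α_k α•_k)⁻¹`. They differ
exactly when `α_l ≠ α•_l`, and then the top terms of the difference do not cancel.
-/

theorem degree_sub_eq_left_of_leadingCoeff_ne {R : Type*} [Ring R] {p q : R[X]}
    (hdeg : p.degree = q.degree) (hlc : p.leadingCoeff ≠ q.leadingCoeff) :
    (p - q).degree = p.degree := by
  have hsum : p.leadingCoeff + (-q).leadingCoeff ≠ 0 := by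
    rwa [leadingCoeff_neg, ← sub_eq_add_neg, sub_ne_zero]
  rw [sub_eq_add_neg, degree_add_eq_of_leadingCoeff_add_ne_zero hsum, degree_neg, ← hdeg, max_self]

section ThreeTerm

variable {R : Type*} [CommRing R] {a b c : R} {p q r : R[X]}

theorem C_mul_eq_of_three_term (h : C a * r + C b * q + C c * p = X * q) :
    C a * r = (X - C b) * q - C c * p := by
  linear_combination h

variable [IsDomain R]

theorem degree_C_mul_lt_degree_X_sub_C_mul (hpq : p.degree < q.degree + 1) :
    (C c * p).degree < ((X - C b) * q).degree := by
  have hle : (C c * p).degree ≤ p.degree := by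
    simpa only [smul_eq_C_mul] using degree_smul_le c p
  rw [degree_mul (p := X - C b), degree_X_sub_C, add_comm]
  exact hle.trans_lt hpq

theorem degree_eq_add_one_of_three_term (ha : a ≠ 0) (hpq : p.degree < q.degree + 1)
    (h : C a * r + C b * q + C c * p = X * q) : r.degree = q.degree + 1 := by
  rw [← degree_C_mul ha, C_mul_eq_of_three_term h,
    degree_sub_eq_left_of_degree_lt (degree_C_mul_lt_degree_X_sub_C_mul hpq), degree_mul,
    degree_X_sub_C, add_comm]

theorem mul_leadingCoeff_of_three_term (hpq : p.degree < q.degree + 1)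
    (h : C a * r + C b * q + C c * p = X * q) : a * r.leadingCoeff = q.leadingCoeff := by
  rw [← leadingCoeff_C a, ← leadingCoeff_mul, C_mul_eq_of_three_term h,
    leadingCoeff_sub_of_degree_lt (degree_C_mul_lt_degree_X_sub_C_mul hpq),
    leadingCoeff_monic_mul (monic_X_sub_C b)]

end ThreeTerm

/-- `p` is the polynomial solution, normalized by `p 0 = 0` and `p 1 = 1`, of the eigenvalue
equation `a n * p (n + 1) + b n * p n + c n * p (n - 1) = λ * p n`, `1 ≤ n ≤ l`, of a tridiagonal
matrix, the spectral parameter `λ` being the variable `X`. The equation is stated with `n + 1` in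
place of `n`, which avoids subtraction on indices. -/
structure IsPolynomialSolution {R : Type*} [Semiring R] (l : ℕ) (a b c : ℕ → R) (p : ℕ → R[X]) :
    Prop where
  zero : p 0 = 0
  one : p 1 = 1
  three_term : ∀ n < l,
    C (a (n + 1)) * p (n + 2) + C (b (n + 1)) * p (n + 1) + C (c (n + 1)) * p n = X * p (n + 1)

namespace IsPolynomialSolution

section Domain

variable {R : Type*} [CommRing R] [IsDomain R] {l n : ℕ} {a b c a' b' c' : ℕ → R} {p q : ℕ → R[X]}

theorem degree_lt_and_degree_succ (hp : IsPolynomialSolution l a b c p)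
    (ha : ∀ k ∈ Finset.Icc 1 l, a k ≠ 0) (hn : n ≤ l) :
    (p n).degree < (p (n + 1)).degree + 1 ∧ (p (n + 1)).degree = n := by
  induction n with
  | zero => simp [hp.zero, hp.one]
  | succ n ih =>
    obtain ⟨hlt, heq⟩ := ih (by lia)
    have hsucc : (p (n + 2)).degree = (n + 1 : ℕ) := by
      rw [degree_eq_add_one_of_three_term (ha _ (by simp; lia)) hlt (hp.three_term n hn), heq,
        Nat.cast_succ]
    refine ⟨?_, hsucc⟩
    rw [heq, hsucc]
    norm_cast
    lia

theorem degree_lt_degree_succ_add_one (hp : IsPolynomialSolution l a b c p)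
    (ha : ∀ k ∈ Finset.Icc 1 l, a k ≠ 0) (hn : n ≤ l) :
    (p n).degree < (p (n + 1)).degree + 1 :=
  (hp.degree_lt_and_degree_succ ha hn).1

theorem degree_succ (hp : IsPolynomialSolution l a b c p)
    (ha : ∀ k ∈ Finset.Icc 1 l, a k ≠ 0) (hn : n ≤ l) : (p (n + 1)).degree = n :=
  (hp.degree_lt_and_degree_succ ha hn).2

theorem degree_mul_succ (hp : IsPolynomialSolution l a b c p)
    (hq : IsPolynomialSolution l a' b' c' q) (ha : ∀ k ∈ Finset.Icc 1 l, a k ≠ 0)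
    (ha' : ∀ k ∈ Finset.Icc 1 l, a' k ≠ 0) (hl : 1 ≤ l) :
    (p l * q (l + 1)).degree = (2 * l - 1 : ℕ) := by
  obtain ⟨m, rfl⟩ := Nat.exists_eq_add_of_le' hl
  rw [degree_mul, hp.degree_succ ha m.le_succ, hq.degree_succ ha' le_rfl, ← Nat.cast_add]
  congr 1
  lia

end Domain

section Field

variable {K : Type*} [Field K] {l n : ℕ} {a b c a' b' c' : ℕ → K} {p q : ℕ → K[X]}

theorem leadingCoeff_succ (hp : IsPolynomialSolution l a b c p)
    (ha : ∀ k ∈ Finset.Icc 1 l, a k ≠ 0) (hn : n ≤ l) :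
    (p (n + 1)).leadingCoeff = ∏ k ∈ Finset.Icc 1 n, (a k)⁻¹ := by
  induction n with
  | zero => simp [hp.one]
  | succ n ih =>
    have hstep : a (n + 1) * (p (n + 2)).leadingCoeff = (p (n + 1)).leadingCoeff :=
      mul_leadingCoeff_of_three_term (hp.degree_lt_degree_succ_add_one ha (by lia))
        (hp.three_term n hn)
    rw [Finset.prod_Icc_succ_top (by lia), ← ih (by lia), ← hstep, mul_comm,
      inv_mul_cancel_left₀ (ha _ (by simp; lia))]

theorem leadingCoeff_mul_succ (hp : IsPolynomialSolution l a b c p)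
    (hq : IsPolynomialSolution l a' b' c' q) (ha : ∀ k ∈ Finset.Icc 1 l, a k ≠ 0)
    (ha' : ∀ k ∈ Finset.Icc 1 l, a' k ≠ 0) (hl : 1 ≤ l) :
    (p l * q (l + 1)).leadingCoeff = (∏ k ∈ Finset.Icc 1 l, (a k * a' k)⁻¹) * a l := by
  obtain ⟨m, rfl⟩ := Nat.exists_eq_add_of_le' hl
  have hne : a (m + 1) ≠ 0 := ha _ (by simp)
  simp only [leadingCoeff_mul, hp.leadingCoeff_succ ha m.le_succ, hq.leadingCoeff_succ ha' le_rfl,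
    mul_inv, Finset.prod_mul_distrib]
  rw [Finset.prod_Icc_succ_top (by lia) fun k ↦ (a k)⁻¹]
  field_simp

end Field

end IsPolynomialSolution

/-- The characteristic polynomial `D` of the discrete transmission eigenvalue problem, for the two
polynomial solutions `p` and `q`: up to sign, the determinant of the system that expresses that
some nontrivial multiples of `p` and `q` agree at both `l` and `l + 1`. -/
noncomputable def transmissionCharPoly {R : Type*} [Ring R] (l : ℕ) (p q : ℕ → R[X]) : R[X] :=
  p l * q (l + 1) - p (l + 1) * q l

theorem transmission_char_poly_degree_general {K L : Type*} [Field K] [Field L] [IsAlgClosed L]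
    [Algebra K L] {l : ℕ} (hl : 1 ≤ l) {a b c a' b' c' : ℕ → K} {p q : ℕ → K[X]}
    (hp : IsPolynomialSolution l a b c p) (hq : IsPolynomialSolution l a' b' c' q)
    (ha : ∀ k ∈ Finset.Icc 1 l, a k ≠ 0) (ha' : ∀ k ∈ Finset.Icc 1 l, a' k ≠ 0)
    (hne : a l ≠ a' l) :
    (transmissionCharPoly l p q).degree = (2 * l - 1 : ℕ) ∧
    (transmissionCharPoly l p q).leadingCoeff
      = (∏ k ∈ Finset.Icc 1 l, (a k * a' k)⁻¹) * (a l - a' l) ∧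
    (∏ k ∈ Finset.Icc 1 l, (a k * a' k)⁻¹) * (a l - a' l) ≠ 0 ∧
    ((transmissionCharPoly l p q).aroots L).card = 2 * l - 1 := by
  have hprod : ∏ k ∈ Finset.Icc 1 l, (a k * a' k)⁻¹ ≠ 0 :=
    Finset.prod_ne_zero_iff.2 fun k hk ↦ inv_ne_zero (mul_ne_zero (ha k hk) (ha' k hk))
  have hlc₁ := hp.leadingCoeff_mul_succ hq ha ha' hl
  have hlc₂ : (p (l + 1) * q l).leadingCoeff = (∏ k ∈ Finset.Icc 1 l, (a k * a' k)⁻¹) * a' l := by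
    simpa only [mul_comm] using hq.leadingCoeff_mul_succ hp ha' ha hl
  have hdeg₁ := hp.degree_mul_succ hq ha ha' hl
  have hdeg₂ : (p (l + 1) * q l).degree = (2 * l - 1 : ℕ) := by
    rw [mul_comm, hq.degree_mul_succ hp ha' ha hl]
  have hlc_ne : (p l * q (l + 1)).leadingCoeff ≠ (p (l + 1) * q l).leadingCoeff := by
    rw [hlc₁, hlc₂]
    exact (mul_right_injective₀ hprod).ne hne
  have hdeg : (transmissionCharPoly l p q).degree = (2 * l - 1 : ℕ) :=
    (degree_sub_eq_left_of_leadingCoeff_ne (hdeg₁.trans hdeg₂.symm) hlc_ne).trans hdeg₁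
  refine ⟨hdeg, ?_, mul_ne_zero hprod (sub_ne_zero.2 hne), ?_⟩
  · rw [transmissionCharPoly, leadingCoeff_sub_of_degree_eq (hdeg₁.trans hdeg₂.symm) hlc_ne,
      hlc₁, hlc₂, mul_sub]
  · rw [IsAlgClosed.card_aroots_eq_natDegree, natDegree_eq_of_degree_eq_some hdeg]

/-- The characteristic polynomial `D = φ l * φ• (l+1) - φ (l+1) * φ• l` of the discrete
transmission eigenvalue problem has degree exactly `2l-1`, with nonzero leading coefficient
`(∏_{k=1}^{l} (α k * α• k)⁻¹) * (α l - α• l)`; consequently the problem has exactly `2l-1`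
eigenvalues counted with multiplicity (the roots of `D` over `ℂ`). -/
theorem transmission_char_poly_degree (l : ℕ) (hl : 1 ≤ l)
    (α β αs βs : ℕ → ℂ)
    (hα : ∀ n, 1 ≤ n → n ≤ l → α n ≠ 0)
    (hαs : ∀ n, 1 ≤ n → n ≤ l → αs n ≠ 0)
    (hne : α l ≠ αs l)
    (φ φs : ℕ → Polynomial ℂ)
    (hφ0 : φ 0 = 0) (hφ1 : φ 1 = 1) (hφs0 : φs 0 = 0) (hφs1 : φs 1 = 1)
    (hrec : ∀ n, 1 ≤ n → n ≤ l →
      C (α n) * φ (n + 1) + C (β n) * φ n + C (α n) * φ (n - 1) = X * φ n)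
    (hrecs : ∀ n, 1 ≤ n → n ≤ l →
      C (αs n) * φs (n + 1) + C (βs n) * φs n + C (αs n) * φs (n - 1) = X * φs n) :
    (φ l * φs (l + 1) - φ (l + 1) * φs l).degree = ((2 * l - 1 : ℕ) : WithBot ℕ) ∧
    (φ l * φs (l + 1) - φ (l + 1) * φs l).leadingCoeff
      = (∏ k ∈ Finset.Icc 1 l, (α k * αs k)⁻¹) * (α l - αs l) ∧
    (∏ k ∈ Finset.Icc 1 l, (α k * αs k)⁻¹) * (α l - αs l) ≠ 0 ∧
    Multiset.card (φ l * φs (l + 1) - φ (l + 1) * φs l).roots = 2 * l - 1 := by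
  have hp : IsPolynomialSolution l α β α φ :=
    ⟨hφ0, hφ1, fun n hn ↦ hrec (n + 1) n.succ_pos hn⟩
  have hq : IsPolynomialSolution l αs βs αs φs :=
    ⟨hφs0, hφs1, fun n hn ↦ hrecs (n + 1) n.succ_pos hn⟩
  simpa [transmissionCharPoly, aroots_def] using
    transmission_char_poly_degree_general (L := ℂ) hl hp hq
      (fun n hn ↦ hα n (Finset.mem_Icc.1 hn).1 (Finset.mem_Icc.1 hn).2)
      (fun n hn ↦ hαs n (Finset.mem_Icc.1 hn).1 (Finset.mem_Icc.1 hn).2) hne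
end

section
/- If two systems of coefficients (a_n, b_n) and (ã_n, b̃_n) (each with all a_n ≠ 0, ã_n ≠ 0) have the same Weyl coefficients M_1,…,M_{2l}, then Q_{l+1}(λ) P̃_{l+1}(λ) − P_{l+1}(λ) Q̃_{l+1}(λ) ≡ 0, i.e., the two Weyl functions coincide: −Q_{l+1}/P_{l+1} = −Q̃_{l+1}/P̃_{l+1} as rational functions. In other words, the Weyl coefficients M_1,…,M_{2l} uniquely specify the Weyl function M(λ). -/
open Polynomial

/-! Put `r = X ^ (2 * l) * Q (l + 1) + P (l + 1) * s` and
`r' = X ^ (2 * l) * Q' (l + 1) + P' (l + 1) * s` with the same polynomial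
`s = ∑ M k * X ^ (2 * l - k)`. Eliminating `s` gives
`r * P' (l + 1) - r' * P (l + 1) = X ^ (2 * l) * (Q (l + 1) * P' (l + 1) - P (l + 1) * Q' (l + 1))`.
The remainders have degree less than `l` and the denominators degree at most `l`, so the left side
has degree less than `2 * l`; being a multiple of `X ^ (2 * l)`, it vanishes. This is the usual
uniqueness argument for Padé approximants at infinity. -/

variable {R : Type*} [CommRing R]

theorem mul_sub_mul_eq_zero_of_degree_lt {f p q p' q' s : R[X]} (hf : f.Monic)
    (h : ((f * q + p * s) * p').degree < f.degree)
    (h' : ((f * q' + p' * s) * p).degree < f.degree) :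
    q * p' - p * q' = 0 := by
  by_contra hne
  have elimination : (f * q + p * s) * p' - (f * q' + p' * s) * p = f * (q * p' - p * q') := by
    ring
  have product_degree_lt : (f * (q * p' - p * q')).degree < f.degree :=
    elimination ▸ (degree_sub_le _ _).trans_lt (max_lt h h')
  have product_ne_zero : f * (q * p' - p * q') ≠ 0 := mt hf.mul_right_eq_zero_iff.mp hne
  exact hf.not_dvd_of_degree_lt product_ne_zero product_degree_lt (dvd_mul_right _ _)

/-- `M 1, …, M (2 * l)` are the Weyl coefficients of the fraction `-q / p`: for `p` of degree `l`
with invertible leading coefficient, they are the first `2 * l` coefficients of its Laurent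
expansion at infinity. The bound `< l` encodes "at most `l - 1`" without truncated subtraction. -/
def HasWeylCoefficients (l : ℕ) (p q : R[X]) (M : ℕ → R) : Prop :=
  (X ^ (2 * l) * q + p * ∑ k ∈ Finset.Icc 1 (2 * l), C (M k) * X ^ (2 * l - k)).degree <
    (l : WithBot ℕ)

theorem HasWeylCoefficients.mul_sub_mul_eq_zero {l : ℕ} {p q p' q' : R[X]} {M : ℕ → R}
    (h : HasWeylCoefficients l p q M) (h' : HasWeylCoefficients l p' q' M)
    (hp : p.degree ≤ l) (hp' : p'.degree ≤ l) :
    q * p' - p * q' = 0 := by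
  nontriviality R
  have degree_mul_lt {r d : R[X]} (hr : r.degree < l) (hd : d.degree ≤ l) :
      (r * d).degree < (X ^ (2 * l) : R[X]).degree := by
    rw [degree_X_pow, two_mul, Nat.cast_add]
    calc (r * d).degree ≤ r.degree + d.degree := degree_mul_le r d
      _ ≤ r.degree + l := by gcongr
      _ < l + l := WithBot.add_lt_add_right (WithBot.natCast_ne_bot l) hr
  exact mul_sub_mul_eq_zero_of_degree_lt (monic_X_pow _) (degree_mul_lt h hp')
    (degree_mul_lt h' hp)

/-- `y` solves the Jacobi difference equation `a n * y (n + 1) + b n * y n + y (n - 1) = λ * y n`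
for `n = 1, …, l`, the spectral parameter `λ` being the polynomial variable `X`. -/
def IsJacobiSolution (a b : ℕ → R) (l : ℕ) (y : ℕ → R[X]) : Prop :=
  ∀ n, 1 ≤ n → n ≤ l → C (a n) * y (n + 1) + C (b n) * y n + y (n - 1) = X * y n

theorem IsJacobiSolution.degree_succ_le {a b : ℕ → R} {l : ℕ} {y : ℕ → R[X]}
    (hy : IsJacobiSolution a b l y) {n : ℕ} (hn : 1 ≤ n) (hnl : n ≤ l) (han : IsRegular (a n)) :
    (y (n + 1)).degree ≤ max ((y n).degree + 1) (y (n - 1)).degree := by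
  have next : a n • y (n + 1) = (X - C (b n)) * y n - y (n - 1) := by
    rw [smul_eq_C_mul]
    linear_combination hy n hn hnl
  have factor : (X - C (b n)).degree ≤ 1 :=
    (degree_sub_le _ _).trans (max_le degree_X_le (degree_C_le.trans zero_le_one))
  calc (y (n + 1)).degree = (a n • y (n + 1)).degree :=
        (degree_smul_of_smul_regular _ han.left.isSMulRegular).symm
    _ ≤ max ((X - C (b n)) * y n).degree (y (n - 1)).degree := next ▸ degree_sub_le _ _
    _ ≤ max ((y n).degree + 1) (y (n - 1)).degree := by
        gcongr
        exact (degree_mul_le_of_le factor le_rfl).trans_eq (add_comm _ _)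

theorem IsJacobiSolution.degree_succ_le_add {a b : ℕ → R} {l : ℕ} {y : ℕ → R[X]}
    (hy : IsJacobiSolution a b l y) (ha : ∀ n, 1 ≤ n → n ≤ l → IsRegular (a n))
    {d : WithBot ℕ} (h0 : (y 0).degree ≤ d) (h1 : (y 1).degree ≤ d) {n : ℕ} (hn : n ≤ l) :
    (y (n + 1)).degree ≤ d + n := by
  suffices (y n).degree ≤ d + n ∧ (y (n + 1)).degree ≤ d + n from this.2
  induction n with
  | zero => simpa using And.intro h0 h1
  | succ n ih =>
    obtain ⟨previous, current⟩ := ih (by lia)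
    have bound_mono : d + (n : WithBot ℕ) ≤ d + (n + 1 : ℕ) := by
      gcongr
      exact n.le_succ
    refine ⟨current.trans bound_mono, ?_⟩
    refine (hy.degree_succ_le n.succ_pos hn (ha _ n.succ_pos hn)).trans ?_
    refine max_le ?_ (previous.trans bound_mono)
    calc (y (n + 1)).degree + 1 ≤ d + n + 1 := by gcongr
      _ = d + (n + 1 : ℕ) := by rw [Nat.cast_succ, add_assoc]

/-- `P` and `Q` are the fundamental solutions of the Jacobi difference equation with coefficients
`a`, `b`, singled out by `P 0 = 0`, `P 1 = 1` and `Q 0 = 1`, `Q 1 = 0`. -/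
structure IsFundamentalSystem (a b : ℕ → R) (l : ℕ) (P Q : ℕ → R[X]) : Prop where
  left_zero : P 0 = 0
  left_one : P 1 = 1
  right_zero : Q 0 = 1
  right_one : Q 1 = 0
  left_isSolution : IsJacobiSolution a b l P
  right_isSolution : IsJacobiSolution a b l Q

theorem IsFundamentalSystem.degree_left_le {a b : ℕ → R} {l : ℕ} {P Q : ℕ → R[X]}
    (h : IsFundamentalSystem a b l P Q) (ha : ∀ n, 1 ≤ n → n ≤ l → IsRegular (a n)) :
    (P (l + 1)).degree ≤ l := by
  have h0 : (P 0).degree ≤ 0 := by simp [h.left_zero]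
  have h1 : (P 1).degree ≤ 0 := h.left_one ▸ degree_one_le
  simpa using h.left_isSolution.degree_succ_le_add ha h0 h1 le_rfl

theorem weyl_coefficients_determine_weyl_function_general {l : ℕ} {a b a' b' : ℕ → R}
    (ha : ∀ n, 1 ≤ n → n ≤ l → IsRegular (a n))
    (ha' : ∀ n, 1 ≤ n → n ≤ l → IsRegular (a' n))
    {P Q P' Q' : ℕ → R[X]}
    (hPQ : IsFundamentalSystem a b l P Q) (hPQ' : IsFundamentalSystem a' b' l P' Q')
    {M : ℕ → R} (hM : HasWeylCoefficients l (P (l + 1)) (Q (l + 1)) M)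
    (hM' : HasWeylCoefficients l (P' (l + 1)) (Q' (l + 1)) M) :
    Q (l + 1) * P' (l + 1) - P (l + 1) * Q' (l + 1) = 0 :=
  hM.mul_sub_mul_eq_zero hM' (hPQ.degree_left_le ha) (hPQ'.degree_left_le ha')

/-- If two systems of coefficients with all `a n ≠ 0`, `ã n ≠ 0` have the same Weyl
coefficients `M 1, …, M (2l)`, then `Q (l+1) * P̃ (l+1) - P (l+1) * Q̃ (l+1) = 0`, i.e. the
two Weyl functions `-Q (l+1)/P (l+1)` and `-Q̃ (l+1)/P̃ (l+1)` coincide: the Weyl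
coefficients uniquely specify the Weyl function. -/
theorem weyl_coefficients_determine_weyl_function (l : ℕ) (hl : 1 ≤ l)
    (a b a' b' : ℕ → ℂ)
    (ha : ∀ n, 1 ≤ n → n ≤ l → a n ≠ 0)
    (ha' : ∀ n, 1 ≤ n → n ≤ l → a' n ≠ 0)
    (P Q P' Q' : ℕ → Polynomial ℂ)
    (hP0 : P 0 = 0) (hP1 : P 1 = 1) (hQ0 : Q 0 = 1) (hQ1 : Q 1 = 0)
    (hP'0 : P' 0 = 0) (hP'1 : P' 1 = 1) (hQ'0 : Q' 0 = 1) (hQ'1 : Q' 1 = 0)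
    (hPrec : ∀ n, 1 ≤ n → n ≤ l →
      C (a n) * P (n + 1) + C (b n) * P n + P (n - 1) = X * P n)
    (hQrec : ∀ n, 1 ≤ n → n ≤ l →
      C (a n) * Q (n + 1) + C (b n) * Q n + Q (n - 1) = X * Q n)
    (hP'rec : ∀ n, 1 ≤ n → n ≤ l →
      C (a' n) * P' (n + 1) + C (b' n) * P' n + P' (n - 1) = X * P' n)
    (hQ'rec : ∀ n, 1 ≤ n → n ≤ l →
      C (a' n) * Q' (n + 1) + C (b' n) * Q' n + Q' (n - 1) = X * Q' n)
    (M : ℕ → ℂ)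
    (hM : (X ^ (2 * l) * Q (l + 1) +
        P (l + 1) * ∑ k ∈ Finset.Icc 1 (2 * l), C (M k) * X ^ (2 * l - k)).degree
        ≤ ((l - 1 : ℕ) : WithBot ℕ))
    (hM' : (X ^ (2 * l) * Q' (l + 1) +
        P' (l + 1) * ∑ k ∈ Finset.Icc 1 (2 * l), C (M k) * X ^ (2 * l - k)).degree
        ≤ ((l - 1 : ℕ) : WithBot ℕ)) :
    Q (l + 1) * P' (l + 1) - P (l + 1) * Q' (l + 1) = 0 := by
  have hlt : ((l - 1 : ℕ) : WithBot ℕ) < l := Nat.cast_lt.mpr (Nat.sub_one_lt_of_lt hl)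
  exact weyl_coefficients_determine_weyl_function_general
    (fun n h h' => IsRegular.of_ne_zero (ha n h h'))
    (fun n h h' => IsRegular.of_ne_zero (ha' n h h'))
    ⟨hP0, hP1, hQ0, hQ1, hPrec, hQrec⟩ ⟨hP'0, hP'1, hQ'0, hQ'1, hP'rec, hQ'rec⟩
    (hM.trans_lt hlt) (hM'.trans_lt hlt)
end

section
/- (Necessity part of Theorem on Weyl coefficients.) If M_1,…,M_{2l} are the Weyl coefficients of a system with a_n ≠ 0 for n = 1,…,l−1 and a_l = 1, then M_1 = 1 and the Hankel determinants satisfy Δ_n := det[M_{i+j−1}]_{i,j=1}^{n+1} ≠ 0 for every n = 1,…,l−1. -/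
open Polynomial

/-!
Let `S = ∑ M_k λ^(2l-k)` and `W_n = λ^(2l) Q_n + P_n S`. Then `W` solves the same three-term
recurrence with `W_0 = λ^(2l)`, and the Weyl condition says that `W_(l+1)` has small degree. The
Casoratian of `W` and `P` forces `W_l` to be monic of degree `l`, and running the recurrence
downwards makes `W_n` monic of degree `2l - n`. Consequently the polynomials
`p_m = a_1 ⋯ a_m P_(m+1)`, which are monic of degree `m`, are orthogonal for the functional
`λ^k ↦ M_(k+1)` with square norms `a_1 ⋯ a_m`, and the Hankel determinants are products of these
norms.
-/

section OrthogonalPolynomials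

variable {R : Type*} [CommRing R]

/-- The linear functional on polynomials with moments `μ`, i.e. `X ^ k ↦ μ k`. Orthogonality of
`f` and `g` with respect to `μ` means that it vanishes on `f * g`. -/
noncomputable def momentFunctional (μ : ℕ → R) : R[X] →ₗ[R] R :=
  lsum fun k => LinearMap.toSpanSingleton R R (μ k)

theorem momentFunctional_X_pow_mul (μ : ℕ → R) (j : ℕ) (f : R[X]) :
    momentFunctional μ (X ^ j * f) = momentFunctional (fun k => μ (j + k)) f := by
  induction f using Polynomial.induction_on' with
  | add f g hf hg => rw [mul_add, map_add, map_add, hf, hg]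
  | monomial k c => simp [momentFunctional, lsum_apply, X_pow_mul_monomial, add_comm]

theorem momentFunctional_eq_sum_range (μ : ℕ → R) {f : R[X]} {n : ℕ} (hf : f.natDegree < n) :
    momentFunctional μ f = ∑ k ∈ Finset.range n, f.coeff k * μ k := by
  simp [momentFunctional, lsum_apply, sum_over_range' f _ n hf]

theorem det_hankel_eq_prod_of_orthogonal (μ : ℕ → R) {n : ℕ} (p : Fin n → R[X])
    (hp : ∀ m : Fin n, IsMonicOfDegree (p m) m)
    (horth : ∀ j m : Fin n, j < m → momentFunctional μ (X ^ (j : ℕ) * p m) = 0) :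
    (Matrix.of fun i j : Fin n => μ (i + j)).det =
      ∏ m : Fin n, momentFunctional μ (X ^ (m : ℕ) * p m) := by
  let T : Matrix (Fin n) (Fin n) R := Matrix.of fun i j => (p j).coeff i
  let L : Matrix (Fin n) (Fin n) R := Matrix.of fun j m => momentFunctional μ (X ^ (j : ℕ) * p m)
  have hT : T.det = 1 :=
    Matrix.det_matrixOfPolynomials p (fun m => (hp m).natDegree_eq) fun m => (hp m).monic
  have hHT : (Matrix.of fun i j : Fin n => μ (i + j)) * T = L := by
    ext j m
    have hdeg : (p m).natDegree < n := (hp m).natDegree_eq ▸ m.isLt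
    simp only [T, L, Matrix.mul_apply, Matrix.of_apply, momentFunctional_X_pow_mul,
      momentFunctional_eq_sum_range _ hdeg, Finset.sum_range]
    exact Finset.sum_congr rfl fun _ _ => mul_comm _ _
  have hL : L.IsLowerTriangular := fun j m hjm => horth j m hjm
  calc (Matrix.of fun i j : Fin n => μ (i + j)).det
      = L.det := by rw [← hHT, Matrix.det_mul, hT, mul_one]
    _ = ∏ m : Fin n, momentFunctional μ (X ^ (m : ℕ) * p m) := Matrix.det_of_isLowerTriangular L hL

/-- The generating polynomial `M 1 * X ^ (N - 1) + ⋯ + M N` of a finite sequence of moments.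
Indices start at `1`, as for Weyl coefficients. -/
noncomputable def momentPolynomial (N : ℕ) (M : ℕ → R) : R[X] :=
  ∑ k ∈ Finset.Icc 1 N, C (M k) * X ^ (N - k)

theorem coeff_mul_momentPolynomial (M : ℕ → R) {f : R[X]} {N : ℕ} (hf : f.natDegree < N) :
    (f * momentPolynomial N M).coeff (N - 1) = momentFunctional (fun k => M (k + 1)) f := by
  have hterm (k : ℕ) (hk : k < N) :
      (f * (C (M (k + 1)) * X ^ (N - (k + 1)))).coeff (N - 1) = f.coeff k * M (k + 1) := by
    rw [← mul_assoc, coeff_mul_X_pow', if_pos (by omega), coeff_mul_C,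
      show N - 1 - (N - (k + 1)) = k by omega]
  calc (f * momentPolynomial N M).coeff (N - 1)
      = ∑ k ∈ Finset.Icc 1 N, (f * (C (M k) * X ^ (N - k))).coeff (N - 1) := by
        rw [momentPolynomial, Finset.mul_sum, finsetSum_coeff]
    _ = ∑ k ∈ Finset.range N, (f * (C (M (k + 1)) * X ^ (N - (k + 1)))).coeff (N - 1) := by
        rw [Finset.range_eq_Ico, ← Finset.Ico_add_one_right_eq_Icc]
        exact (Finset.sum_Ico_add'
          (fun k => (f * (C (M k) * X ^ (N - k))).coeff (N - 1)) 0 N 1).symm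
    _ = ∑ k ∈ Finset.range N, f.coeff k * M (k + 1) :=
        Finset.sum_congr rfl fun k hk => hterm k (Finset.mem_range.1 hk)
    _ = momentFunctional (fun k => M (k + 1)) f := (momentFunctional_eq_sum_range _ hf).symm

end OrthogonalPolynomials

section ThreeTermRecurrence

variable {R : Type*} [CommRing R] {l : ℕ} {a b : ℕ → R} {y z : ℕ → R[X]}

/-- `y` solves the difference equation `a_n y_(n+1) + b_n y_n + y_(n-1) = λ y_n` for
`n = 1, …, l`, the spectral parameter `λ` being the polynomial variable. -/
def IsThreeTermSolution (l : ℕ) (a b : ℕ → R) (y : ℕ → R[X]) : Prop :=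
  ∀ n, 1 ≤ n → n ≤ l → C (a n) * y (n + 1) + C (b n) * y n + y (n - 1) = X * y n

theorem IsThreeTermSolution.C_mul_succ_succ (hy : IsThreeTermSolution l a b y) {n : ℕ}
    (hn : n < l) :
    C (a (n + 1)) * y (n + 2) = (X - C (b (n + 1))) * y (n + 1) - y n := by
  have h := hy (n + 1) n.succ_pos hn
  rw [Nat.add_sub_cancel] at h
  linear_combination h

theorem IsThreeTermSolution.eq_sub_C_mul (hy : IsThreeTermSolution l a b y) {n : ℕ} (hn : n < l) :
    y n = (X - C (b (n + 1))) * y (n + 1) - C (a (n + 1)) * y (n + 2) := by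
  rw [hy.C_mul_succ_succ hn, sub_sub_cancel]

/-- The Casoratian of two sequences, the discrete analogue of the Wronskian. -/
noncomputable def casoratian (y z : ℕ → R[X]) (n : ℕ) : R[X] :=
  y n * z (n + 1) - y (n + 1) * z n

theorem IsThreeTermSolution.C_prod_mul_casoratian (hy : IsThreeTermSolution l a b y)
    (hz : IsThreeTermSolution l a b z) {n : ℕ} (hn : n ≤ l) :
    C (∏ i ∈ Finset.Icc 1 n, a i) * casoratian y z n = casoratian y z 0 := by
  induction n with
  | zero => simp
  | succ n ih =>
    have hstep : C (a (n + 1)) * casoratian y z (n + 1) = casoratian y z n := by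
      unfold casoratian
      linear_combination y (n + 1) * hz.C_mul_succ_succ hn - z (n + 1) * hy.C_mul_succ_succ hn
    rw [Finset.prod_Icc_succ_top n.succ_pos, C_mul, mul_assoc, hstep, ih (by omega)]

theorem isMonicOfDegree_X_sub_C_mul_sub [Nontrivial R] {f g : R[X]} {d : ℕ}
    (hf : IsMonicOfDegree f d) (hg : g.natDegree ≤ d) (β : R) :
    IsMonicOfDegree ((X - C β) * f - g) (d + 1) := by
  rw [add_comm d]
  exact ((isMonicOfDegree_X_sub_one β).mul hf).sub (by omega)

/-- The monic multiple of the solution `P` with `P 0 = 0` and `P 1 = 1`, shifted so that the index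
is the degree. -/
noncomputable def monicSolution (a : ℕ → R) (P : ℕ → R[X]) (n : ℕ) : R[X] :=
  C (∏ i ∈ Finset.Icc 1 n, a i) * P (n + 1)

variable {P : ℕ → R[X]}

theorem IsThreeTermSolution.monicSolution_succ (hP : IsThreeTermSolution l a b P) {n : ℕ}
    (hn : n < l) :
    monicSolution a P (n + 1) = (X - C (b (n + 1))) * monicSolution a P n -
      C (∏ i ∈ Finset.Icc 1 n, a i) * P n := by
  rw [monicSolution, monicSolution, Finset.prod_Icc_succ_top n.succ_pos, C_mul, mul_assoc,
    hP.C_mul_succ_succ hn]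
  ring

theorem C_mul_monicSolution (a : ℕ → R) (P : ℕ → R[X]) (n : ℕ) :
    C (a (n + 1)) * monicSolution a P n = C (∏ i ∈ Finset.Icc 1 (n + 1), a i) * P (n + 1) := by
  rw [monicSolution, Finset.prod_Icc_succ_top n.succ_pos, C_mul]
  ring

theorem IsThreeTermSolution.isMonicOfDegree_monicSolution [Nontrivial R]
    (hP : IsThreeTermSolution l a b P) (hP0 : P 0 = 0) (hP1 : P 1 = 1) {n : ℕ} (hn : n ≤ l) :
    IsMonicOfDegree (monicSolution a P n) n := by
  suffices h : (C (∏ i ∈ Finset.Icc 1 n, a i) * P n).natDegree ≤ n ∧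
      IsMonicOfDegree (monicSolution a P n) n from h.2
  induction n with
  | zero => simp [monicSolution, hP0, hP1]
  | succ n ih =>
    obtain ⟨hdeg, hmonic⟩ := ih (by omega)
    constructor
    · rw [← C_mul_monicSolution]
      exact (natDegree_C_mul_le _ _).trans (hmonic.natDegree_eq.le.trans n.le_succ)
    · rw [hP.monicSolution_succ hn]
      exact isMonicOfDegree_X_sub_C_mul_sub hmonic hdeg _

theorem IsThreeTermSolution.isMonicOfDegree_last [Nontrivial R]
    (hP : IsThreeTermSolution l a b P) (hP0 : P 0 = 0) (hP1 : P 1 = 1)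
    (hy : IsThreeTermSolution l a b y) {d : ℕ} (hy0 : IsMonicOfDegree (y 0) (d + l))
    (hyl : (y (l + 1)).natDegree ≤ d) :
    IsMonicOfDegree (y l) d := by
  cases l with
  | zero => exact hy0
  | succ k =>
    have hcas : y (k + 1) * monicSolution a P (k + 1) =
        y 0 + y (k + 2) * (C (a (k + 1)) * monicSolution a P k) := by
      have h := hy.C_prod_mul_casoratian hP le_rfl
      simp only [casoratian, hP0, hP1, zero_add, mul_one, mul_zero, sub_zero] at h
      rw [C_mul_monicSolution, monicSolution]
      linear_combination h
    have hdeg : (C (a (k + 1)) * monicSolution a P k).natDegree ≤ k :=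
      (natDegree_C_mul_le _ _).trans
        (hP.isMonicOfDegree_monicSolution hP0 hP1 k.le_succ).natDegree_eq.le
    refine (hP.isMonicOfDegree_monicSolution hP0 hP1 le_rfl).of_mul_right ?_
    rw [hcas]
    exact hy0.add_right ((natDegree_mul_le_of_le hyl hdeg).trans_lt (by omega))

theorem IsThreeTermSolution.isMonicOfDegree_of_last [Nontrivial R]
    (hy : IsThreeTermSolution l a b y) {d : ℕ} (hyl : IsMonicOfDegree (y l) d)
    (hyl' : (y (l + 1)).natDegree ≤ d) {n : ℕ} (hn : n ≤ l) :
    IsMonicOfDegree (y n) (d + (l - n)) := by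
  suffices h : (y (n + 1)).natDegree ≤ d + (l - n) ∧ IsMonicOfDegree (y n) (d + (l - n)) from h.2
  induction hn using Nat.decreasingInduction with
  | self => simpa using ⟨hyl', hyl⟩
  | of_succ n hn ih =>
    obtain ⟨hdeg, hmonic⟩ := ih
    rw [show d + (l - n) = d + (l - (n + 1)) + 1 by omega]
    refine ⟨hmonic.natDegree_eq.le.trans (Nat.le_succ _), ?_⟩
    rw [hy.eq_sub_C_mul hn]
    exact isMonicOfDegree_X_sub_C_mul_sub hmonic ((natDegree_C_mul_le _ _).trans hdeg) _

end ThreeTermRecurrence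

section WeylCoefficients

variable {R : Type*} [CommRing R] {l : ℕ} {a b : ℕ → R} {P Q : ℕ → R[X]} {M : ℕ → R}

/-- The solution `X ^ (2l) Q_n + P_n S` built from the numbers `M 1, …, M (2l)`. They are the Weyl
coefficients when its term of index `l + 1` has degree at most `l - 1`. -/
noncomputable def weylSolution (l : ℕ) (P Q : ℕ → R[X]) (M : ℕ → R) (n : ℕ) : R[X] :=
  X ^ (2 * l) * Q n + P n * momentPolynomial (2 * l) M

theorem isThreeTermSolution_weylSolution (hP : IsThreeTermSolution l a b P)
    (hQ : IsThreeTermSolution l a b Q) (M : ℕ → R) :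
    IsThreeTermSolution l a b (weylSolution l P Q M) := fun n h1 hn => by
  unfold weylSolution
  linear_combination X ^ (2 * l) * hQ n h1 hn + momentPolynomial (2 * l) M * hP n h1 hn

theorem isMonicOfDegree_weylSolution [Nontrivial R] (hP : IsThreeTermSolution l a b P)
    (hQ : IsThreeTermSolution l a b Q) (hP0 : P 0 = 0) (hP1 : P 1 = 1) (hQ0 : Q 0 = 1)
    (hM : (weylSolution l P Q M (l + 1)).natDegree ≤ l) {n : ℕ} (hn : n ≤ l) :
    IsMonicOfDegree (weylSolution l P Q M n) (2 * l - n) := by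
  have hW := isThreeTermSolution_weylSolution hP hQ M
  have hW0 : IsMonicOfDegree (weylSolution l P Q M 0) (l + l) := by
    simpa [weylSolution, hP0, hQ0, two_mul] using isMonicOfDegree_X_pow R (l + l)
  have hWl := hP.isMonicOfDegree_last hP0 hP1 hW hW0 hM
  rw [show 2 * l - n = l + (l - n) by omega]
  exact hW.isMonicOfDegree_of_last hWl hM hn

theorem momentFunctional_X_pow_mul_monicSolution (a : ℕ → R) (P Q : ℕ → R[X]) (M : ℕ → R)
    {m j : ℕ} (hdeg : (monicSolution a P m).natDegree ≤ m) (hjm : j + m < 2 * l) :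
    momentFunctional (fun k => M (k + 1)) (X ^ j * monicSolution a P m) =
      (∏ i ∈ Finset.Icc 1 m, a i) * (weylSolution l P Q M (m + 1)).coeff (2 * l - 1 - j) := by
  have hlt : (X ^ j * monicSolution a P m).natDegree < 2 * l :=
    (natDegree_mul_le_of_le (natDegree_X_pow_le j) hdeg).trans_lt hjm
  have hsplit : X ^ j * monicSolution a P m * momentPolynomial (2 * l) M =
      C (∏ i ∈ Finset.Icc 1 m, a i) * (weylSolution l P Q M (m + 1) * X ^ j) -
        X ^ j * C (∏ i ∈ Finset.Icc 1 m, a i) * Q (m + 1) * X ^ (2 * l) := by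
    unfold monicSolution weylSolution
    ring
  rw [← coeff_mul_momentPolynomial M hlt, hsplit, coeff_sub, coeff_C_mul,
    coeff_mul_X_pow', if_pos (by omega), coeff_mul_X_pow', if_neg (by omega), sub_zero]

theorem weyl_coefficients_necessity_general (hP : IsThreeTermSolution l a b P)
    (hQ : IsThreeTermSolution l a b Q) (hP0 : P 0 = 0) (hP1 : P 1 = 1) (hQ0 : Q 0 = 1)
    (hM : (weylSolution l P Q M (l + 1)).natDegree ≤ l) {n : ℕ} (hn : n < l) :
    (Matrix.of fun i j : Fin (n + 1) => M (i + j + 1)).det =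
      ∏ m : Fin (n + 1), ∏ i ∈ Finset.Icc 1 (m : ℕ), a i := by
  nontriviality R
  have hmonic (m : Fin (n + 1)) : IsMonicOfDegree (monicSolution a P m) m :=
    hP.isMonicOfDegree_monicSolution hP0 hP1 (by omega)
  have hW (m : Fin (n + 1)) : IsMonicOfDegree (weylSolution l P Q M (m + 1)) (2 * l - 1 - m) := by
    rw [Nat.sub_sub, add_comm 1]
    exact isMonicOfDegree_weylSolution hP hQ hP0 hP1 hQ0 hM (by omega)
  have hpair (j m : Fin (n + 1)) :
      momentFunctional (fun k => M (k + 1)) (X ^ (j : ℕ) * monicSolution a P m) =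
        (∏ i ∈ Finset.Icc 1 (m : ℕ), a i) *
          (weylSolution l P Q M (m + 1)).coeff (2 * l - 1 - j) :=
    momentFunctional_X_pow_mul_monicSolution a P Q M (hmonic m).natDegree_eq.le (by omega)
  have horth (j m : Fin (n + 1)) (hjm : j < m) :
      momentFunctional (fun k => M (k + 1)) (X ^ (j : ℕ) * monicSolution a P m) = 0 := by
    rw [hpair, coeff_eq_zero_of_natDegree_lt (by rw [(hW m).natDegree_eq]; omega), mul_zero]
  rw [det_hankel_eq_prod_of_orthogonal (fun k => M (k + 1)) _ hmonic horth]
  refine Finset.prod_congr rfl fun m _ => ?_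
  rw [hpair, ← (hW m).natDegree_eq, coeff_natDegree, (hW m).leadingCoeff_eq, mul_one]

end WeylCoefficients

/-- Necessity part of the theorem on Weyl coefficients: if `M 1, …, M (2l)` are the Weyl
coefficients of a system with `a n ≠ 0` for `n = 1,…,l-1` and `a l = 1`, then `M 1 = 1` and
the Hankel determinants `Δ_n = det [M (i+j-1)]_{i,j=1}^{n+1}` are nonzero for `n = 1,…,l-1`. -/
theorem weyl_coefficients_necessity (l : ℕ) (hl : 1 ≤ l) (a b : ℕ → ℂ)
    (ha : ∀ n, 1 ≤ n → n ≤ l - 1 → a n ≠ 0) (hal : a l = 1)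
    (P Q : ℕ → Polynomial ℂ)
    (hP0 : P 0 = 0) (hP1 : P 1 = 1) (hQ0 : Q 0 = 1) (hQ1 : Q 1 = 0)
    (hPrec : ∀ n, 1 ≤ n → n ≤ l →
      C (a n) * P (n + 1) + C (b n) * P n + P (n - 1) = X * P n)
    (hQrec : ∀ n, 1 ≤ n → n ≤ l →
      C (a n) * Q (n + 1) + C (b n) * Q n + Q (n - 1) = X * Q n)
    (M : ℕ → ℂ)
    (hM : (X ^ (2 * l) * Q (l + 1) +
        P (l + 1) * ∑ k ∈ Finset.Icc 1 (2 * l), C (M k) * X ^ (2 * l - k)).degree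
        ≤ ((l - 1 : ℕ) : WithBot ℕ)) :
    M 1 = 1 ∧
    ∀ n, 1 ≤ n → n ≤ l - 1 →
      Matrix.det (Matrix.of fun i j : Fin (n + 1) => M ((i : ℕ) + (j : ℕ) + 1)) ≠ 0 := by
  have hdet (n : ℕ) (hn : n < l) := weyl_coefficients_necessity_general hPrec hQrec hP0 hP1 hQ0
    ((natDegree_le_of_degree_le hM).trans l.pred_le) hn
  refine ⟨by simpa using hdet 0 hl, fun n _ hn => ?_⟩
  rw [hdet n (by omega)]
  exact Finset.prod_ne_zero_iff.2 fun m _ => Finset.prod_ne_zero_iff.2 fun i hi =>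
    ha i (Finset.mem_Icc.1 hi).1 ((Finset.mem_Icc.1 hi).2.trans (by omega))
end

section
/- (Sufficiency part of Theorem on Weyl coefficients.) Let M_1,…,M_{2l} be complex numbers with M_1 = 1 such that the Hankel determinants Δ_n := det[M_{i+j−1}]_{i,j=1}^{n+1} are nonzero for all n = 1,…,l−1. Then there exist complex numbers a_1,…,a_l and b_1,…,b_l with a_n ≠ 0 for n = 1,…,l−1 and a_l = 1 such that M_1,…,M_{2l} are the Weyl coefficients of the corresponding system. -/
open Polynomial

/-!
Put `A = X ^ (2 l)`, `B = ∑ M k X ^ (2 l - k)`, and let `R n = A Q n + B P n` be the solution of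
the system with initial values `A`, `B`. The Weyl coefficients are `M 1, …, M (2 l)` exactly when
`R (l + 1)` has degree at most `l - 1`, which happens if each step
`a n R (n + 1) = (X - b n) R n - R (n - 1)` lowers the degree by one, that is, if the recurrence
is the Euclidean algorithm for `A` and `B` with monic remainders and linear quotients. A suitable
`b n` makes the right side have degree at most `2 l - n - 1`. For `n < l` the degree cannot be
smaller: otherwise the coefficient vector of `P (n + 1)` would be a nonzero kernel vector of the
Hankel matrix `[M (i + j - 1)]` of size `n + 1`. So `a n` can be taken to be the leading
coefficient of the right side.
-/

theorem exists_degree_X_sub_C_mul_sub_le {R : Type*} [CommRing R] {A B : R[X]} {d : ℕ}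
    (hA : IsMonicOfDegree A (d + 2)) (hB : IsMonicOfDegree B (d + 1)) :
    ∃ β : R, ((X - C β) * B - A).degree ≤ (d : WithBot ℕ) := by
  refine ⟨B.coeff d - A.coeff (d + 1), ?_⟩
  nontriviality R
  have hBtop : B.coeff (d + 1) = 1 := ((isMonicOfDegree_iff _ _).1 hB).2
  have hXB (β : R) : IsMonicOfDegree ((X - C β) * B) (d + 2) := by
    simpa only [add_comm 1, add_assoc] using (isMonicOfDegree_X_sub_one β).mul hB
  rw [degree_le_iff_coeff_zero]
  intro m hm
  obtain rfl | hm' : m = d + 1 ∨ d + 2 ≤ m := by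
    have : d < m := by exact_mod_cast hm
    lia
  · simp [sub_mul, hBtop]
  · rw [coeff_sub, (hXB _).coeff_eq hA hm', sub_self]

theorem isMonicOfDegree_C_leadingCoeff_inv_mul {K : Type*} [Field K] {p : K[X]} {n : ℕ}
    (hp : p.degree = n) : IsMonicOfDegree (C p.leadingCoeff⁻¹ * p) n := by
  have hlead : p.leadingCoeff ≠ 0 := leadingCoeff_ne_zero.2 fun h => by simp [h] at hp
  refine ⟨?_, monic_C_mul_of_mul_leadingCoeff_eq_one (inv_mul_cancel₀ hlead)⟩
  rw [natDegree_C_mul (inv_ne_zero hlead), natDegree_eq_of_degree_eq_some hp]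

/-- The solution of `a n * y (n + 1) + b n * y n + y (n - 1) = X * y n`, `n ≥ 1`, with initial
values `y₀` and `y₁`, provided that no `a n` with `n ≥ 1` vanishes. -/
noncomputable def jacobiSolution {K : Type*} [Field K] (a b : ℕ → K) (y₀ y₁ : K[X]) : ℕ → K[X]
  | 0 => y₀
  | 1 => y₁
  | n + 2 => C (a (n + 1))⁻¹ *
      ((X - C (b (n + 1))) * jacobiSolution a b y₀ y₁ (n + 1) - jacobiSolution a b y₀ y₁ n)

namespace jacobiSolution

variable {K : Type*} [Field K] {a b : ℕ → K} {y₀ y₁ : K[X]} {n : ℕ}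

theorem recurrence (hn : 1 ≤ n) (ha : a n ≠ 0) :
    C (a n) * jacobiSolution a b y₀ y₁ (n + 1) + C (b n) * jacobiSolution a b y₀ y₁ n +
      jacobiSolution a b y₀ y₁ (n - 1) = X * jacobiSolution a b y₀ y₁ n := by
  obtain ⟨n, rfl⟩ := Nat.exists_eq_add_of_le' hn
  rw [jacobiSolution, ← mul_assoc, ← C_mul, mul_inv_cancel₀ ha, C_1, Nat.add_sub_cancel]
  ring

theorem eq_mul_add_mul (a b : ℕ → K) (y₀ y₁ : K[X]) : ∀ n, jacobiSolution a b y₀ y₁ n =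
    y₀ * jacobiSolution a b 1 0 n + y₁ * jacobiSolution a b 0 1 n
  | 0 => by simp [jacobiSolution]
  | 1 => by simp [jacobiSolution]
  | n + 2 => by
    simp only [jacobiSolution, eq_mul_add_mul a b y₀ y₁ n, eq_mul_add_mul a b y₀ y₁ (n + 1)]
    ring

theorem congr_coeffs {a' b' : ℕ → K} : ∀ {n}, (∀ k < n, a k = a' k) → (∀ k < n, b k = b' k) →
    jacobiSolution a b y₀ y₁ n = jacobiSolution a' b' y₀ y₁ n
  | 0, _, _ => rfl
  | 1, _, _ => rfl
  | n + 2, ha, hb => by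
    rw [jacobiSolution, jacobiSolution, ha _ (n + 1).lt_succ_self, hb _ (n + 1).lt_succ_self,
      congr_coeffs (n := n + 1) (fun k hk => ha k (by lia)) (fun k hk => hb k (by lia)),
      congr_coeffs (n := n) (fun k hk => ha k (by lia)) (fun k hk => hb k (by lia))]

theorem update_left {k : ℕ} (hnk : n ≤ k) (c : K) :
    jacobiSolution (Function.update a k c) b y₀ y₁ n = jacobiSolution a b y₀ y₁ n :=
  congr_coeffs (fun _ hj => Function.update_of_ne (by lia) _ _) fun _ _ => rfl

theorem update_right {k : ℕ} (hnk : n ≤ k) (β : K) :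
    jacobiSolution a (Function.update b k β) y₀ y₁ n = jacobiSolution a b y₀ y₁ n :=
  congr_coeffs (fun _ _ => rfl) fun _ hj => Function.update_of_ne (by lia) _ _

theorem update_left_mul_succ (c : K) :
    jacobiSolution (Function.update a (n + 1) (a (n + 1) * c)) b y₀ y₁ (n + 2) =
      C c⁻¹ * jacobiSolution a b y₀ y₁ (n + 2) := by
  rw [jacobiSolution, jacobiSolution, update_left le_rfl, update_left n.le_succ,
    Function.update_self, mul_inv_rev, C_mul, mul_assoc]

theorem degree_succ_succ (ha : a (n + 1) ≠ 0)
    (hlt : (jacobiSolution a b y₀ y₁ n).degree < (jacobiSolution a b y₀ y₁ (n + 1)).degree) :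
    (jacobiSolution a b y₀ y₁ (n + 2)).degree = (jacobiSolution a b y₀ y₁ (n + 1)).degree + 1 := by
  have hmul : ((X - C (b (n + 1))) * jacobiSolution a b y₀ y₁ (n + 1)).degree =
      (jacobiSolution a b y₀ y₁ (n + 1)).degree + 1 := by
    rw [degree_mul, degree_X_sub_C, add_comm]
  rw [jacobiSolution, degree_C_mul (inv_ne_zero ha), degree_sub_eq_left_of_degree_lt, hmul]
  exact hlt.trans_le (hmul ▸ le_add_of_nonneg_right zero_le_one)

theorem degree_zero_one (ha : ∀ n, a n ≠ 0) (n : ℕ) :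
    (jacobiSolution a b 0 1 (n + 1)).degree = n := by
  suffices h : (jacobiSolution a b 0 1 n).degree < (jacobiSolution a b 0 1 (n + 1)).degree ∧
      (jacobiSolution a b 0 1 (n + 1)).degree = n from h.2
  induction n with
  | zero => simp [jacobiSolution]
  | succ n ih =>
    have hdeg := degree_succ_succ (ha (n + 1)) ih.1
    rw [hdeg, ih.2]
    exact ⟨by exact_mod_cast n.lt_succ_self, by norm_cast⟩

theorem exists_update_right_degree_le {N : ℕ} (hn : n + 2 ≤ N)
    (h₀ : IsMonicOfDegree (jacobiSolution a b y₀ y₁ n) (N - n))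
    (h₁ : IsMonicOfDegree (jacobiSolution a b y₀ y₁ (n + 1)) (N - (n + 1))) :
    ∃ β, (jacobiSolution a (Function.update b (n + 1) β) y₀ y₁ (n + 2)).degree ≤
      ((N - (n + 2) : ℕ) : WithBot ℕ) := by
  rw [show N - n = N - (n + 2) + 2 by lia] at h₀
  rw [show N - (n + 1) = N - (n + 2) + 1 by lia] at h₁
  obtain ⟨β, hβ⟩ := exists_degree_X_sub_C_mul_sub_le h₀ h₁
  refine ⟨β, ?_⟩
  rw [jacobiSolution, update_right le_rfl, update_right n.le_succ, Function.update_self,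
    ← smul_eq_C_mul]
  exact (degree_smul_le _ _).trans hβ

theorem exists_update_left_isMonicOfDegree {d : ℕ} (ha : a (n + 1) ≠ 0)
    (hdeg : (jacobiSolution a b y₀ y₁ (n + 2)).degree = d) :
    ∃ c ≠ 0, IsMonicOfDegree (jacobiSolution (Function.update a (n + 1) c) b y₀ y₁ (n + 2)) d := by
  have hlead : (jacobiSolution a b y₀ y₁ (n + 2)).leadingCoeff ≠ 0 :=
    leadingCoeff_ne_zero.2 fun h => by simp [h] at hdeg
  refine ⟨_, mul_ne_zero ha hlead, ?_⟩
  rw [update_left_mul_succ]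
  exact isMonicOfDegree_C_leadingCoeff_inv_mul hdeg

theorem exists_isMonicOfDegree_and_degree_le {N : ℕ} (h₀ : IsMonicOfDegree y₀ N)
    (h₁ : IsMonicOfDegree y₁ (N - 1)) (m : ℕ) (hm : m + 2 ≤ N)
    (hreg : ∀ n, 1 ≤ n → n ≤ m → ∀ p q : K[X], p.degree = n →
      ((N - (n + 1) : ℕ) : WithBot ℕ) ≤ (y₀ * q + y₁ * p).degree) :
    ∃ a b : ℕ → K, (∀ n, a n ≠ 0) ∧ (∀ n, m < n → a n = 1) ∧
      IsMonicOfDegree (jacobiSolution a b y₀ y₁ (m + 1)) (N - (m + 1)) ∧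
      (jacobiSolution a b y₀ y₁ (m + 2)).degree ≤ ((N - (m + 2) : ℕ) : WithBot ℕ) := by
  induction m with
  | zero =>
    obtain ⟨β, hβ⟩ := exists_update_right_degree_le (a := 1) (b := 0) hm h₀ h₁
    exact ⟨1, _, fun _ => one_ne_zero, fun _ _ => rfl, h₁, hβ⟩
  | succ m ih =>
    obtain ⟨a, b, ha, ha_one, hmonic, hle⟩ := ih (by lia) fun n hn hnm => hreg n hn (by lia)
    have hdeg : (jacobiSolution a b y₀ y₁ (m + 2)).degree = ((N - (m + 2) : ℕ) : WithBot ℕ) := by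
      refine hle.antisymm ?_
      rw [eq_mul_add_mul]
      exact hreg (m + 1) (by lia) le_rfl _ _ (degree_zero_one ha (m + 1))
    obtain ⟨c, hc, hmonic'⟩ := exists_update_left_isMonicOfDegree (ha (m + 1)) hdeg
    rw [← update_left (b := b) le_rfl c] at hmonic
    obtain ⟨β, hβ⟩ := exists_update_right_degree_le hm hmonic hmonic'
    refine ⟨_, _, fun n => ?_, fun n hn => ?_, ?_, hβ⟩
    · rw [Function.update_apply]
      split_ifs
      exacts [hc, ha n]
    · rw [Function.update_of_ne (by lia), ha_one n (by lia)]
    · rwa [update_right le_rfl]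

end jacobiSolution

/-- The polynomial part of `X ^ N * ∑ k ≥ 1, M k * X ^ (-k)`, by which `P (l + 1)` is multiplied in
the condition defining the Weyl coefficients, for `N = 2 * l`. -/
noncomputable def weylPolynomial {R : Type*} [Semiring R] (M : ℕ → R) (N : ℕ) : R[X] :=
  ∑ k ∈ Finset.Icc 1 N, C (M k) * X ^ (N - k)

/-- The Hankel matrix of size `n + 1` whose determinant is `Δ_n`, with rows and columns indexed
from 0, hence the entry `M (i + j + 1)`. -/
def hankelMatrix {R : Type*} (M : ℕ → R) (n : ℕ) : Matrix (Fin (n + 1)) (Fin (n + 1)) R :=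
  Matrix.of fun i j => M ((i : ℕ) + (j : ℕ) + 1)

namespace weylPolynomial

variable {R : Type*}

theorem coeff_of_lt [Semiring R] (M : ℕ → R) {N j : ℕ} (hj : j < N) :
    (weylPolynomial M N).coeff j = M (N - j) := by
  simp only [weylPolynomial, finsetSum_coeff, coeff_C_mul_X_pow]
  rw [Finset.sum_eq_single_of_mem (N - j) (Finset.mem_Icc.2 (by lia)) fun k hk hne => ?_]
  · rw [if_pos (by lia)]
  · rw [Finset.mem_Icc] at hk
    rw [if_neg (by lia)]

theorem natDegree_le [Semiring R] (M : ℕ → R) (N : ℕ) :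
    (weylPolynomial M N).natDegree ≤ N - 1 :=
  natDegree_sum_le_of_forall_le _ _ fun k hk =>
    (natDegree_C_mul_X_pow_le _ _).trans (by have := Finset.mem_Icc.1 hk; lia)

theorem isMonicOfDegree [Semiring R] [Nontrivial R] {M : ℕ → R} (hM : M 1 = 1) {N : ℕ}
    (hN : 1 ≤ N) : IsMonicOfDegree (weylPolynomial M N) (N - 1) := by
  refine (isMonicOfDegree_iff _ _).2 ⟨natDegree_le M N, ?_⟩
  rw [coeff_of_lt M (by lia), ← hM]
  congr 1
  lia

theorem coeff_mul_eq_hankelMatrix_mulVec [CommSemiring R] (M : ℕ → R) {N n : ℕ}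
    (hN : 2 * n + 1 ≤ N) {p : R[X]} (hp : p.natDegree ≤ n) (i : Fin (n + 1)) :
    (weylPolynomial M N * p).coeff (N - 1 - i) =
      (hankelMatrix M n).mulVec (fun j => p.coeff j) i := by
  conv_lhs => rw [p.as_sum_range_C_mul_X_pow' (Nat.lt_succ_of_le hp), Finset.mul_sum,
    finsetSum_coeff, Finset.sum_range]
  refine Finset.sum_congr rfl fun j _ => ?_
  rw [← mul_assoc, coeff_mul_X_pow', if_pos (by lia), coeff_mul_C, coeff_of_lt M (by lia)]
  congr 2
  lia

theorem le_degree_add_of_hankelMatrix_det_ne_zero [CommRing R] [NoZeroDivisors R] {M : ℕ → R}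
    {N n : ℕ} (hN : 2 * n + 1 ≤ N) (hdet : (hankelMatrix M n).det ≠ 0) {p : R[X]}
    (hp : p.degree = n) (q : R[X]) :
    ((N - (n + 1) : ℕ) : WithBot ℕ) ≤ (X ^ N * q + weylPolynomial M N * p).degree := by
  by_contra! hlt
  have hkernel : (hankelMatrix M n).mulVec (fun j => p.coeff j) = 0 := by
    ext i
    have hcoeff : (X ^ N * q + weylPolynomial M N * p).coeff (N - 1 - i) = 0 :=
      coeff_eq_zero_of_degree_lt (hlt.trans_le (Nat.cast_le.2 (by lia)))
    rwa [coeff_add, coeff_X_pow_mul', if_neg (by lia), zero_add,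
      coeff_mul_eq_hankelMatrix_mulVec M hN (natDegree_le_of_degree_le hp.le)] at hcoeff
  have hzero : p.coeff n = 0 :=
    congrFun (Matrix.eq_zero_of_mulVec_eq_zero hdet hkernel) (Fin.last n)
  exact coeff_ne_zero_of_eq_degree hp hzero

end weylPolynomial

theorem weyl_coefficients_sufficiency_general {K : Type*} [Field K] (l : ℕ) (hl : 1 ≤ l)
    (M : ℕ → K) (hM1 : M 1 = 1)
    (hΔ : ∀ n, 1 ≤ n → n ≤ l - 1 →
      Matrix.det (Matrix.of fun i j : Fin (n + 1) => M ((i : ℕ) + (j : ℕ) + 1)) ≠ 0) :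
    ∃ a b : ℕ → K, (∀ n, 1 ≤ n → n ≤ l - 1 → a n ≠ 0) ∧ a l = 1 ∧
      ∃ P Q : ℕ → K[X],
        P 0 = 0 ∧ P 1 = 1 ∧ Q 0 = 1 ∧ Q 1 = 0 ∧
        (∀ n, 1 ≤ n → n ≤ l →
          C (a n) * P (n + 1) + C (b n) * P n + P (n - 1) = X * P n) ∧
        (∀ n, 1 ≤ n → n ≤ l →
          C (a n) * Q (n + 1) + C (b n) * Q n + Q (n - 1) = X * Q n) ∧
        (X ^ (2 * l) * Q (l + 1) +
          P (l + 1) * ∑ k ∈ Finset.Icc 1 (2 * l), C (M k) * X ^ (2 * l - k)).degree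
          ≤ ((l - 1 : ℕ) : WithBot ℕ) := by
  obtain ⟨m, rfl⟩ := Nat.exists_eq_add_of_le' hl
  have hreg : ∀ n, 1 ≤ n → n ≤ m → ∀ p q : K[X], p.degree = n →
      ((2 * (m + 1) - (n + 1) : ℕ) : WithBot ℕ) ≤
        (X ^ (2 * (m + 1)) * q + weylPolynomial M (2 * (m + 1)) * p).degree :=
    fun n hn hnm _ q hp => weylPolynomial.le_degree_add_of_hankelMatrix_det_ne_zero (by lia)
      (hΔ n hn hnm) hp q
  obtain ⟨a, b, ha, ha_one, -, hdeg⟩ := jacobiSolution.exists_isMonicOfDegree_and_degree_le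
    (isMonicOfDegree_X_pow K _) (weylPolynomial.isMonicOfDegree hM1 (by lia)) m (by lia) hreg
  refine ⟨a, b, fun n _ _ => ha n, ha_one _ m.lt_succ_self, jacobiSolution a b 0 1,
    jacobiSolution a b 1 0, rfl, rfl, rfl, rfl,
    fun n hn _ => jacobiSolution.recurrence hn (ha n),
    fun n hn _ => jacobiSolution.recurrence hn (ha n), ?_⟩
  rw [jacobiSolution.eq_mul_add_mul, show 2 * (m + 1) - (m + 2) = m by lia] at hdeg
  rwa [mul_comm (jacobiSolution a b 0 1 _)]

/-- Sufficiency part of the theorem on Weyl coefficients: if `M 1 = 1` and all the Hankel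
determinants `Δ_n = det [M (i+j-1)]_{i,j=1}^{n+1}`, `n = 1,…,l-1`, are nonzero, then
`M 1, …, M (2l)` are the Weyl coefficients of some system with `a n ≠ 0` for `n = 1,…,l-1`
and `a l = 1`. -/
theorem weyl_coefficients_sufficiency (l : ℕ) (hl : 1 ≤ l) (M : ℕ → ℂ) (hM1 : M 1 = 1)
    (hΔ : ∀ n, 1 ≤ n → n ≤ l - 1 →
      Matrix.det (Matrix.of fun i j : Fin (n + 1) => M ((i : ℕ) + (j : ℕ) + 1)) ≠ 0) :
    ∃ a b : ℕ → ℂ, (∀ n, 1 ≤ n → n ≤ l - 1 → a n ≠ 0) ∧ a l = 1 ∧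
      ∃ P Q : ℕ → Polynomial ℂ,
        P 0 = 0 ∧ P 1 = 1 ∧ Q 0 = 1 ∧ Q 1 = 0 ∧
        (∀ n, 1 ≤ n → n ≤ l →
          C (a n) * P (n + 1) + C (b n) * P n + P (n - 1) = X * P n) ∧
        (∀ n, 1 ≤ n → n ≤ l →
          C (a n) * Q (n + 1) + C (b n) * Q n + Q (n - 1) = X * Q n) ∧
        (X ^ (2 * l) * Q (l + 1) +
          P (l + 1) * ∑ k ∈ Finset.Icc 1 (2 * l), C (M k) * X ^ (2 * l - k)).degree
          ≤ ((l - 1 : ℕ) : WithBot ℕ) :=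
  weyl_coefficients_sufficiency_general l hl M hM1 hΔ
end

section
/- (Lemma 3.1.) Let R_0, R_1 ∈ ℂ[λ] be relatively prime polynomials such that R_0 has degree l with leading coefficient r_0 ≠ 0 and R_1 has degree l−1 with leading coefficient r_1 ≠ 0, where r_0 ≠ r_1. Let E ∈ ℂ[λ] be any polynomial of degree 2l−1 with leading coefficient r_0 − r_1. Then there exist unique polynomials v_0 and v_1, with v_0 monic of degree l and v_1 monic of degree l−1, such that E(λ) = R_0(λ) v_1(λ) − R_1(λ) v_0(λ). -/
open Polynomial

/-!
After subtracting the prescribed leading terms, `v0 = X ^ l + w0` and `v1 = X ^ (l - 1) + w1`, the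
equation becomes `R0 * w1 - R1 * w0 = F` with `deg w0 < l` and `deg w1 < l - 1`, where
`F = E - R0 * X ^ (l - 1) + R1 * X ^ l` has degree `< 2 * l - 1` because the leading coefficients
cancel. This is a square linear system whose matrix is the Sylvester matrix of `R0` and `-R1`, and
its determinant, the resultant, is a unit because `R0` and `R1` are coprime.
-/

section

variable {A : Type*} [CommRing A] {m n : ℕ} {P Q : A[X]}

theorem isUnit_resultant_of_isCoprime (hP : IsUnit P.leadingCoeff) (hQ : Q.natDegree ≤ n)
    (h : IsCoprime P Q) : IsUnit (resultant P Q P.natDegree n) := by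
  obtain ⟨k, rfl⟩ := Nat.exists_eq_add_of_le hQ
  rw [resultant_add_right_deg P Q _ _ k le_rfl]
  refine (hP.pow k).mul ?_
  let c : A := ↑hP.unit⁻¹
  have hc : IsUnit c := hP.unit⁻¹.isUnit
  have hmonic : (C c * P).Monic := by
    simpa only [Units.smul_def, smul_eq_C_mul] using monic_of_isUnit_leadingCoeff_inv_smul hP
  have hdeg : (C c * P).natDegree = P.natDegree := natDegree_C_mul_of_isUnit hc P
  have hres : IsUnit (resultant (C c * P) Q) := (isUnit_resultant_iff_isCoprime hmonic).mpr <|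
    (isCoprime_mul_unit_left_left (isUnit_C.mpr hc) P Q).mpr h
  rw [hdeg, resultant_C_mul_left] at hres
  exact isUnit_of_mul_isUnit_right hres

theorem bijective_sylvesterMap (hP : P.natDegree ≤ m) (hQ : Q.natDegree ≤ n)
    (h : IsUnit (resultant P Q m n)) : Function.Bijective (sylvesterMap P Q hP hQ) := by
  have left_adj (x) : adjSylvester P Q (sylvesterMap P Q hP hQ x) = resultant P Q m n • x :=
    LinearMap.congr_fun (adjSylvester_comp_sylveserMap P Q hP hQ) x
  have right_adj (y) : sylvesterMap P Q hP hQ (adjSylvester P Q y) = resultant P Q m n • y :=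
    LinearMap.congr_fun (sylveserMap_comp_adjSylvester P Q hP hQ) y
  constructor
  · intro x y hxy
    apply h.smul_left_cancel.mp
    rw [← left_adj x, ← left_adj y, hxy]
  · intro y
    refine ⟨(↑h.unit⁻¹ : A) • adjSylvester P Q y, ?_⟩
    rw [map_smul, right_adj, smul_smul, h.val_inv_mul, one_smul]

theorem existsUnique_degree_lt_eq_mul_add_mul {F : A[X]} (hP : P.natDegree ≤ m)
    (hQ : Q.natDegree ≤ n) (h : IsUnit (resultant P Q m n)) (hF : F.degree < (m + n : ℕ)) :
    ∃! w : A[X] × A[X], w.1.degree < m ∧ w.2.degree < n ∧ F = P * w.2 + Q * w.1 := by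
  obtain ⟨w, hw, hw_unique⟩ :=
    (bijective_sylvesterMap hP hQ h).existsUnique ⟨F, mem_degreeLT.mpr hF⟩
  refine ⟨(w.1, w.2), ⟨mem_degreeLT.mp w.1.2, mem_degreeLT.mp w.2.2,
    (congrArg Subtype.val hw).symm⟩, ?_⟩
  rintro ⟨u, v⟩ ⟨hu, hv, huv⟩
  have huv_eq := hw_unique (⟨u, mem_degreeLT.mpr hu⟩, ⟨v, mem_degreeLT.mpr hv⟩)
    (Subtype.ext huv.symm)
  rw [← huv_eq]

end

section

variable {A : Type*} [Ring A] {m n : ℕ} {P Q : A[X]}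

theorem monic_and_degree_eq_iff_degree_sub_X_pow_lt [Nontrivial A] :
    P.Monic ∧ P.degree = m ↔ (P - X ^ m).degree < (m : WithBot ℕ) := by
  constructor
  · rintro ⟨hmonic, hdeg⟩
    rw [← hdeg]
    exact degree_sub_lt_left (hdeg.trans (degree_X_pow m).symm) hmonic.ne_zero
      (hmonic.leadingCoeff.trans (monic_X_pow m).leadingCoeff.symm)
  · intro h
    rw [← add_sub_cancel (X ^ m) P]
    refine ⟨monic_X_pow_add h, ?_⟩
    rw [degree_add_eq_left_of_degree_lt (by rwa [degree_X_pow]), degree_X_pow]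

theorem degree_sub_mul_X_pow_add_mul_X_pow_lt {E : A[X]} (hP : P.natDegree ≤ m)
    (hQ : Q.natDegree ≤ n) (hE : E.natDegree ≤ m + n)
    (hcoeff : E.coeff (m + n) = P.coeff m - Q.coeff n) :
    (E - P * X ^ n + Q * X ^ m).degree < ((m + n : ℕ) : WithBot ℕ) := by
  rw [degree_lt_iff_coeff_zero]
  intro k hk
  obtain rfl | hlt := hk.eq_or_lt
  · have hQ_coeff : (Q * X ^ m).coeff (m + n) = Q.coeff n := by
      rw [add_comm, coeff_mul_X_pow]
    rw [coeff_add, coeff_sub, coeff_mul_X_pow, hQ_coeff, hcoeff]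
    abel
  · have hPX : (P * X ^ n).natDegree ≤ m + n :=
      natDegree_mul_le_of_le hP (natDegree_X_pow_le n)
    have hQX : (Q * X ^ m).natDegree ≤ n + m :=
      natDegree_mul_le_of_le hQ (natDegree_X_pow_le m)
    rw [coeff_add, coeff_sub, coeff_eq_zero_of_natDegree_lt (by lia : E.natDegree < k),
      coeff_eq_zero_of_natDegree_lt (by lia : (P * X ^ n).natDegree < k),
      coeff_eq_zero_of_natDegree_lt (by lia : (Q * X ^ m).natDegree < k), sub_zero, add_zero]

end

theorem exists_unique_v0_v1_general {A : Type*} [CommRing A] [Nontrivial A] {m n : ℕ}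
    {R0 R1 E : A[X]} (hcop : IsCoprime R0 R1) (hR0 : IsUnit R0.leadingCoeff)
    (hR0d : R0.degree = m) (hR1d : R1.degree ≤ n) (hEd : E.degree ≤ (m + n : ℕ))
    (hcoeff : E.coeff (m + n) = R0.coeff m - R1.coeff n) :
    ∃! vp : A[X] × A[X],
      vp.1.Monic ∧ vp.1.degree = m ∧ vp.2.Monic ∧ vp.2.degree = n ∧
      E = R0 * vp.2 - R1 * vp.1 := by
  have hR0n : R0.natDegree = m := natDegree_eq_of_degree_eq_some hR0d
  have hR1n : R1.natDegree ≤ n := natDegree_le_of_degree_le hR1d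
  have hR1neg : (-R1).natDegree ≤ n := (natDegree_neg R1).trans_le hR1n
  have hres : IsUnit (resultant R0 (-R1) m n) :=
    hR0n ▸ isUnit_resultant_of_isCoprime hR0 hR1neg hcop.neg_right
  have hlower := existsUnique_degree_lt_eq_mul_add_mul hR0n.le hR1neg hres
    (degree_sub_mul_X_pow_add_mul_X_pow_lt hR0n.le hR1n (natDegree_le_of_degree_le hEd) hcoeff)
  refine ((Equiv.subRight ((X ^ m, X ^ n) : A[X] × A[X])).existsUnique_congr fun vp ↦ ?_).mpr hlower
  have hequation : E = R0 * vp.2 - R1 * vp.1 ↔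
      E - R0 * X ^ n + R1 * X ^ m = R0 * (vp.2 - X ^ n) + -R1 * (vp.1 - X ^ m) := by
    constructor <;> intro h <;> linear_combination h
  simp only [Equiv.subRight_apply, Prod.fst_sub, Prod.snd_sub, ← hequation,
    ← monic_and_degree_eq_iff_degree_sub_X_pow_lt, and_assoc]

/-- Lemma 3.1: if `R0`, `R1` are relatively prime polynomials over `ℂ` with
`deg R0 = l`, `leadingCoeff R0 = r0 ≠ 0`, `deg R1 = l-1`, `leadingCoeff R1 = r1 ≠ 0`,
`r0 ≠ r1`, and `E` is any polynomial of degree `2l-1` with leading coefficient `r0 - r1`,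
then there exists a unique pair `(v0, v1)` of monic polynomials of degrees `l` and `l-1`
respectively such that `E = R0 * v1 - R1 * v0`. -/
theorem exists_unique_v0_v1 (l : ℕ) (hl : 1 ≤ l) (R0 R1 : Polynomial ℂ) (r0 r1 : ℂ)
    (hcop : IsCoprime R0 R1)
    (hR0d : R0.degree = (l : WithBot ℕ)) (hR0lc : R0.leadingCoeff = r0) (hr0 : r0 ≠ 0)
    (hR1d : R1.degree = ((l - 1 : ℕ) : WithBot ℕ)) (hR1lc : R1.leadingCoeff = r1)
    (hr1 : r1 ≠ 0) (hne : r0 ≠ r1)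
    (E : Polynomial ℂ)
    (hEd : E.degree = ((2 * l - 1 : ℕ) : WithBot ℕ)) (hElc : E.leadingCoeff = r0 - r1) :
    ∃! vp : Polynomial ℂ × Polynomial ℂ,
      vp.1.Monic ∧ vp.1.degree = (l : WithBot ℕ) ∧
      vp.2.Monic ∧ vp.2.degree = ((l - 1 : ℕ) : WithBot ℕ) ∧
      E = R0 * vp.2 - R1 * vp.1 := by
  rw [show 2 * l - 1 = l + (l - 1) by lia] at hEd
  exact exists_unique_v0_v1_general hcop (hR0lc ▸ hr0.isUnit) hR0d hR1d.le hEd.le <| by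
    simpa only [leadingCoeff, natDegree_eq_of_degree_eq_some hR0d,
      natDegree_eq_of_degree_eq_some hR1d, natDegree_eq_of_degree_eq_some hEd,
      ← hR0lc, ← hR1lc] using hElc
end

section
/- (Theorem 3.1, solvability criterion for the inverse problem with polynomials in the boundary condition.) Let λ_1,…,λ_{2l−1} be complex numbers. Define E(λ) = (r_0 − r_1)·∏_{j=1}^{2l−1}(λ − λ_j); let v_0 (monic, degree l) and v_1 (monic, degree l−1) be the unique polynomials with E = R_0 v_1 − R_1 v_0; and let M_1,…,M_{2l−1} be the coefficients of the quotient of λ^{2l−1} v_1(λ) upon division by v_0(λ), written as quotient = Σ_{k=1}^{2l−1} M_k λ^{2l−1−k}. Then λ_1,…,λ_{2l−1} are the eigenvalues (zeros, counted with multiplicity, of the characteristic polynomial R_0 w_1 − R_1 w_0, where [w_n]_{n=0}^{l+1} solves a_n w_{n+1} + b_n w_n + w_{n−1} = λ w_n with w_{l+1} = 0, w_l = 1) of the boundary value problem for some complex coefficients a_1,…,a_l, b_1,…,b_l with a_n ≠ 0 for n = 1,…,l−1 and a_l = 1, if and only if the Hankel determinants Δ_n := det[M_{i+j−1}]_{i,j=1}^{n+1}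 are nonzero for all n = 1,…,l−1. -/
open Polynomial

/-!
Expand `g / f` at infinity as `∑ M k / X ^ k`. The Hankel matrix `(M (i + j + 1))` of size `n` is
singular exactly when some nonzero `p` of degree `< n` makes `p * (g / f)` a polynomial up to
`O(X ^ (-n - 1))`. One Euclidean step `f = (X - b) f' - g'`, `g = c f'` turns such a `p` of order
`n + 1` for `(f, g)` into one of order `n` for `(f', g')`, with the same remainder. Hence all the
Hankel determinants are nonzero iff every step of the Euclidean algorithm lowers the degree by
exactly one, and then its quotients and remainders are the coefficients and the solution of the
difference equation. Coprimality of `R0` and `R1` recovers `v 0` and `v 1` from `E`.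
-/

namespace InverseProblem

section DegreeLT

variable {R : Type*} [CommRing R]

lemma mul_mem_degreeLT {p q : R[X]} {m n : ℕ} (hp : p ∈ degreeLT R m) (hq : q ∈ degreeLT R n) :
    p * q ∈ degreeLT R (m + n - 1) := by
  rcases m with _ | m
  · have hp0 : p = 0 := by simpa [mem_degreeLT] using hp
    simp only [hp0, zero_mul, Submodule.zero_mem]
  rcases n with _ | n
  · have hq0 : q = 0 := by simpa [mem_degreeLT] using hq
    simp only [hq0, mul_zero, Submodule.zero_mem]
  rw [degreeLT_succ_eq_degreeLE, mem_degreeLE] at hp hq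
  rw [show m + 1 + (n + 1) - 1 = m + n + 1 by omega, degreeLT_succ_eq_degreeLE, mem_degreeLE]
  exact_mod_cast degree_mul_le_of_le hp hq

lemma C_mul_mem_degreeLT {p : R[X]} {n : ℕ} (c : R) (hp : p ∈ degreeLT R n) :
    C c * p ∈ degreeLT R n := by
  rw [C_mul']
  exact Submodule.smul_mem _ c hp

lemma mem_degreeLT_of_natDegree_lt {p : R[X]} {n : ℕ} (h : p.natDegree < n) :
    p ∈ degreeLT R n :=
  mem_degreeLT.mpr (degree_le_natDegree.trans_lt (by exact_mod_cast h))

lemma mul_monic_mem_degreeLT_iff {p f : R[X]} (hf : f.Monic) {n : ℕ} :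
    p * f ∈ degreeLT R (n + f.natDegree) ↔ p ∈ degreeLT R n := by
  nontriviality R
  rw [mem_degreeLT, mem_degreeLT, hf.degree_mul, degree_eq_natDegree hf.ne_zero, Nat.cast_add]
  exact WithBot.add_lt_add_iff_right (WithBot.natCast_ne_bot _)

lemma eq_zero_of_mul_monic_mem_degreeLT {p f : R[X]} (hf : f.Monic) {n : ℕ}
    (hn : n ≤ f.natDegree) (h : p * f ∈ degreeLT R n) : p = 0 := by
  have hp : p ∈ degreeLT R 0 :=
    (mul_monic_mem_degreeLT_iff hf).mp (degreeLT_mono (by omega) h)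
  simpa [mem_degreeLT] using hp

lemma mem_degreeLT_of_mul_sub_mul_mem {f g p q : R[X]} (hf : f.Monic)
    (hg : g ∈ degreeLT R f.natDegree) {m n : ℕ} (hp : p ∈ degreeLT R (n + 1))
    (hm : m ≤ n + f.natDegree) (h : p * g - q * f ∈ degreeLT R m) : q ∈ degreeLT R n := by
  rw [← mul_monic_mem_degreeLT_iff hf, ← sub_sub_cancel (p * g) (q * f)]
  exact sub_mem (degreeLT_mono (by omega) (mul_mem_degreeLT hp hg)) (degreeLT_mono hm h)

lemma exists_sub_mul_X_pow_mem_degreeLT_iff {A : R[X]} {N n : ℕ} (hn : n ≤ N) :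
    (∃ q, A - q * X ^ N ∈ degreeLT R (N - n)) ↔ ∀ i < n, A.coeff (N - (i + 1)) = 0 := by
  constructor
  · rintro ⟨q, hq⟩ i hi
    have hc : (A - q * X ^ N).coeff (N - (i + 1)) = 0 :=
      coeff_eq_zero_of_degree_lt (mem_degreeLT.mp (degreeLT_mono (by omega) hq))
    rwa [coeff_sub, coeff_mul_X_pow', if_neg (by omega), sub_zero] at hc
  · intro h
    nontriviality R
    have hdiv : A %ₘ X ^ N = A - A /ₘ X ^ N * X ^ N := by
      rw [modByMonic_eq_sub_mul_div, mul_comm]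
    refine ⟨A /ₘ X ^ N, mem_degreeLT.mpr ((degree_lt_iff_coeff_zero _ _).mpr fun m hm => ?_)⟩
    rcases lt_or_ge m N with hmN | hmN
    · rw [coeff_sub, coeff_mul_X_pow', if_neg (by omega), sub_zero]
      simpa only [show N - (N - (m + 1) + 1) = m by omega] using h (N - (m + 1)) (by omega)
    · rw [← hdiv]
      refine coeff_eq_zero_of_degree_lt ((degree_modByMonic_lt A (monic_X_pow N)).trans_le ?_)
      rw [degree_X_pow]
      exact_mod_cast hmN

lemma coeff_mul_eq_sum_fin {p : R[X]} {n : ℕ} (hp : p ∈ degreeLT R n) (Q : R[X]) {N i : ℕ}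
    (hi : i + n ≤ N) :
    (p * Q).coeff (N - (i + 1)) = ∑ j : Fin n, Q.coeff (N - (i + j + 1)) * p.coeff j := by
  have hsum : p = ∑ j : Fin n, C (p.coeff j) * X ^ (j : ℕ) := by
    conv_lhs => rw [← p.sum_C_mul_X_pow_eq]
    exact (sum_fin (fun j c => C c * X ^ j) (by simp) (mem_degreeLT.mp hp)).symm
  conv_lhs => rw [hsum, Finset.sum_mul, finsetSum_coeff]
  refine Finset.sum_congr rfl fun j _ => ?_
  rw [mul_assoc, coeff_C_mul, coeff_X_pow_mul', if_pos (by omega), mul_comm,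
    show N - (i + 1) - j = N - (i + j + 1) by omega]

lemma exists_eq_X_sub_C_mul_sub {f g : R[X]} (hf : f.Monic) (hg : g.Monic)
    (hdeg : f.natDegree = g.natDegree + 1) :
    ∃ b, ∃ r ∈ degreeLT R g.natDegree, f = (X - C b) * g - r := by
  nontriviality R
  have hQmonic : (f /ₘ g).Monic := by
    rw [Monic, leadingCoeff_divByMonic_of_monic hg, hf.leadingCoeff]
    rw [degree_eq_natDegree hf.ne_zero, degree_eq_natDegree hg.ne_zero, hdeg]
    exact_mod_cast Nat.le_succ _
  have hQ : f /ₘ g = X - C (-(f /ₘ g).coeff 0) := by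
    rw [C_neg, sub_neg_eq_add]
    exact hQmonic.eq_X_add_C (by rw [natDegree_divByMonic f hg, hdeg, Nat.add_sub_cancel_left])
  refine ⟨-(f /ₘ g).coeff 0, -(f %ₘ g), neg_mem ?_, ?_⟩
  · rw [mem_degreeLT, ← degree_eq_natDegree hg.ne_zero]
    exact degree_modByMonic_lt f hg
  · rw [← hQ]
    linear_combination -modByMonic_add_div f g

lemma degree_lt_degree_X_sub_C_mul [Nontrivial R] {f g : R[X]} (hf : f.Monic)
    (hg : g ∈ degreeLT R f.natDegree) (b : R) : g.degree < ((X - C b) * f).degree := by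
  rw [hf.degree_mul, degree_X_sub_C, degree_eq_natDegree hf.ne_zero]
  exact (mem_degreeLT.mp hg).trans (by exact_mod_cast Nat.lt_add_of_pos_left one_pos)

lemma monic_X_sub_C_mul_sub {f g : R[X]} (hf : f.Monic) (hg : g ∈ degreeLT R f.natDegree)
    (b : R) : ((X - C b) * f - g).Monic := by
  nontriviality R
  exact ((monic_X_sub_C b).mul hf).sub_of_left (degree_lt_degree_X_sub_C_mul hf hg b)

lemma natDegree_X_sub_C_mul_sub [Nontrivial R] {f g : R[X]} (hf : f.Monic)
    (hg : g ∈ degreeLT R f.natDegree) (b : R) :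
    ((X - C b) * f - g).natDegree = f.natDegree + 1 := by
  rw [natDegree_eq_of_degree_eq
      (degree_sub_eq_left_of_degree_lt (degree_lt_degree_X_sub_C_mul hf hg b)),
    (monic_X_sub_C b).natDegree_mul hf, natDegree_X_sub_C, add_comm]

lemma eq_and_eq_of_mul_sub_mul_eq [IsDomain R] {P Q f f' g g' : R[X]} (hPQ : IsCoprime P Q)
    (hdeg : (f - f').degree < P.degree) (h : P * g - Q * f = P * g' - Q * f') :
    f = f' ∧ g = g' := by
  have hdvd : P ∣ f - f' := hPQ.dvd_of_dvd_mul_left ⟨g - g', by linear_combination -h⟩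
  have hf : f = f' := sub_eq_zero.mp (eq_zero_of_dvd_of_degree_lt hdvd hdeg)
  refine ⟨hf, mul_left_cancel₀ (ne_zero_of_degree_gt hdeg) ?_⟩
  linear_combination h + Q * hf

end DegreeLT

variable {K : Type*} [Field K]

/-- `g / f` is *Padé degenerate* of order `n`: for some nonzero `p` of degree `< n` the
expansion at infinity of `p * (g / f)` has no terms `X ^ (-1), …, X ^ (-n)`; the polynomial
part of that product is `q`. Only meant for `n ≤ f.natDegree`, where the subtraction does not
truncate. -/
def IsPadeDegenerate (f g : K[X]) (n : ℕ) : Prop :=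
  ∃ p q : K[X], p ≠ 0 ∧ p ∈ degreeLT K n ∧ p * g - q * f ∈ degreeLT K (f.natDegree - n)

lemma not_isPadeDegenerate_zero (f g : K[X]) : ¬ IsPadeDegenerate f g 0 := by
  rintro ⟨p, q, hp, hpn, -⟩
  exact hp (by simpa [mem_degreeLT] using hpn)

lemma not_isPadeDegenerate_one {f g : K[X]} (hf : f.Monic) (hg : g.Monic)
    (hdeg : f.natDegree = g.natDegree + 1) : ¬ IsPadeDegenerate f g 1 := by
  rintro ⟨p, q, hp, hp1, hr⟩
  have hgf : g ∈ degreeLT K f.natDegree := mem_degreeLT_of_natDegree_lt (by omega)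
  have hq : q ∈ degreeLT K 0 := mem_degreeLT_of_mul_sub_mul_mem hf hgf hp1 (by omega) hr
  have hq0 : q = 0 := by simpa [mem_degreeLT] using hq
  rw [hq0, zero_mul, sub_zero] at hr
  exact hp (eq_zero_of_mul_monic_mem_degreeLT hg (by omega) hr)

lemma isPadeDegenerate_one_of_mem_degreeLT {f g : K[X]}
    (hg : g ∈ degreeLT K (f.natDegree - 1)) : IsPadeDegenerate f g 1 :=
  ⟨1, 0, one_ne_zero, mem_degreeLT_of_natDegree_lt (by simp), by simpa using hg⟩

lemma isPadeDegenerate_succ_iff {f g : K[X]} (hf : f.Monic) (hg : g ∈ degreeLT K f.natDegree)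
    {c : K} (hc : c ≠ 0) (b : K) (n : ℕ) :
    IsPadeDegenerate ((X - C b) * f - g) (C c * f) (n + 1) ↔ IsPadeDegenerate f g n := by
  set F := (X - C b) * f - g with hF
  have hFmonic : F.Monic := monic_X_sub_C_mul_sub hf hg b
  have hFdeg : F.natDegree = f.natDegree + 1 := natDegree_X_sub_C_mul_sub hf hg b
  have hcf : C c * f ∈ degreeLT K F.natDegree :=
    C_mul_mem_degreeLT c (mem_degreeLT_of_natDegree_lt (by omega))
  rw [IsPadeDegenerate, IsPadeDegenerate, hFdeg, Nat.add_sub_add_right]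
  constructor
  · rintro ⟨p, q, hp, hpn, hr⟩
    refine ⟨q, q * (X - C b) - p * C c, ?_,
      mem_degreeLT_of_mul_sub_mul_mem hFmonic hcf hpn (by omega) hr, ?_⟩
    · rintro rfl
      rw [zero_mul, sub_zero, ← mul_assoc] at hr
      have hpc := eq_zero_of_mul_monic_mem_degreeLT hf (Nat.sub_le _ _) hr
      exact hp ((mul_eq_zero_iff_right (C_ne_zero.mpr hc)).mp hpc)
    · convert hr using 1
      rw [hF]
      ring
  · rintro ⟨p, q, hp, hpn, hr⟩
    have hcc : C c⁻¹ * C c = (1 : K[X]) := by rw [← C_mul, inv_mul_cancel₀ hc, C_1]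
    have hr' : C c⁻¹ * (p * (X - C b) - q) * (C c * f) - p * F = p * g - q * f := by
      rw [hF]
      linear_combination (p * (X - C b) - q) * f * hcc
    have hpn' : p ∈ degreeLT K (n + 1) := degreeLT_mono n.le_succ hpn
    have hX : X - C b ∈ degreeLT K 2 :=
      mem_degreeLT_of_natDegree_lt ((natDegree_X_sub_C b).trans_lt one_lt_two)
    have hpX : p * (X - C b) ∈ degreeLT K (n + 1) := by
      simpa only [Nat.add_succ_sub_one] using mul_mem_degreeLT hpn hX
    have hq : q ∈ degreeLT K (n + 1) :=
      degreeLT_mono n.le_succ (mem_degreeLT_of_mul_sub_mul_mem hf hg hpn' (by omega) hr)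
    rw [← hr'] at hr
    refine ⟨C c⁻¹ * (p * (X - C b) - q), p, ?_, C_mul_mem_degreeLT _ (sub_mem hpX hq), hr⟩
    intro h0
    rw [h0, zero_mul, zero_sub, neg_mem_iff] at hr
    exact hp (eq_zero_of_mul_monic_mem_degreeLT hFmonic (by omega) hr)

lemma isPadeDegenerate_iff_coeff {f g : K[X]} (hf : f.Monic) {N n : ℕ} (hn : n ≤ f.natDegree)
    (hN : 2 * n ≤ N + 1) :
    IsPadeDegenerate f g n ↔ ∃ p ∈ degreeLT K n, p ≠ 0 ∧
      ∀ i < n, (p * ((X ^ N * g) /ₘ f)).coeff (N - (i + 1)) = 0 := by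
  set Q := (X ^ N * g) /ₘ f
  set T := (X ^ N * g) %ₘ f
  have hdiv : T + f * Q = X ^ N * g := modByMonic_add_div _ f
  have hT : T ∈ degreeLT K f.natDegree := by
    rw [mem_degreeLT, ← degree_eq_natDegree hf.ne_zero]
    exact degree_modByMonic_lt _ hf
  have hiff {p : K[X]} (hp : p ∈ degreeLT K n) (q : K[X]) :
      p * g - q * f ∈ degreeLT K (f.natDegree - n) ↔
        p * Q - q * X ^ N ∈ degreeLT K (N - n) := by
    have hpT : p * T ∈ degreeLT K (N - n + f.natDegree) :=
      degreeLT_mono (by omega) (mul_mem_degreeLT hp hT)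
    rw [← mul_monic_mem_degreeLT_iff (monic_X_pow N), natDegree_X_pow,
      ← mul_monic_mem_degreeLT_iff hf (n := N - n), ← Submodule.add_mem_iff_left _ hpT,
      show f.natDegree - n + N = N - n + f.natDegree by omega]
    refine iff_of_eq (congrArg (· ∈ _) ?_)
    linear_combination -p * hdiv
  constructor
  · rintro ⟨p, q, hp, hpn, hr⟩
    exact ⟨p, hpn, hp, (exists_sub_mul_X_pow_mem_degreeLT_iff (by omega)).mp
      ⟨q, (hiff hpn q).mp hr⟩⟩
  · rintro ⟨p, hpn, hp, hcoeff⟩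
    obtain ⟨q, hq⟩ := (exists_sub_mul_X_pow_mem_degreeLT_iff (by omega)).mpr hcoeff
    exact ⟨p, q, hp, hpn, (hiff hpn q).mpr hq⟩

lemma det_hankel_eq_zero_iff (c : ℕ → K) (n : ℕ) :
    (Matrix.of fun i j : Fin n => c (i + j)).det = 0 ↔
      ∃ p ∈ degreeLT K n, p ≠ 0 ∧ ∀ i < n, ∑ j : Fin n, c (i + j) * p.coeff j = 0 := by
  rw [← Matrix.exists_mulVec_eq_zero_iff, (degreeLTEquiv K n).surjective.exists, Subtype.exists]
  simp only [ne_eq, degreeLTEquiv_eq_zero_iff_eq_zero]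
  refine exists_congr fun p => Iff.trans (exists_congr fun hp => and_congr_right fun _ => ?_)
    exists_prop
  rw [funext_iff, Fin.forall_iff]
  rfl

lemma det_hankel_eq_zero_iff_isPadeDegenerate {f g : K[X]} (hf : f.Monic) {N n : ℕ}
    (hn : n ≤ f.natDegree) (hN : 2 * n ≤ N + 1) {M : ℕ → K}
    (hM : (X ^ N * g) /ₘ f = ∑ k ∈ Finset.Icc 1 N, C (M k) * X ^ (N - k)) :
    (Matrix.of fun i j : Fin n => M (i + j + 1)).det = 0 ↔ IsPadeDegenerate f g n := by
  have hcoeff {k : ℕ} (hk : k + 1 ≤ N) :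
      ((X ^ N * g) /ₘ f).coeff (N - (k + 1)) = M (k + 1) := by
    rw [hM, finsetSum_coeff, Finset.sum_eq_single_of_mem (k + 1)
      (Finset.mem_Icc.mpr ⟨by omega, hk⟩)]
    · rw [coeff_C_mul_X_pow, if_pos rfl]
    · intro j hj hjk
      rw [Finset.mem_Icc] at hj
      rw [coeff_C_mul_X_pow, if_neg (by omega)]
  rw [det_hankel_eq_zero_iff (fun k => M (k + 1)), isPadeDegenerate_iff_coeff hf hn hN]
  refine exists_congr fun p => and_congr_right fun hp => and_congr_right fun _ =>
    forall₂_congr fun i hi => ?_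
  rw [coeff_mul_eq_sum_fin hp _ (by omega)]
  refine iff_of_eq (congrArg (· = 0) (Finset.sum_congr rfl fun j _ => ?_))
  rw [hcoeff (by omega)]

/-- `v` solves the difference equation of the boundary value problem of size `l`, with the
terminal values `v l = 1`, `v (l + 1) = 0`. The coefficient `b n` is the paper's `b_{n+1}`,
whereas `a` is indexed as in the paper, so that `a 0` is free: it is used as the factor in
the pair `(v 0, a 0 * v 1)`. -/
structure IsTerminalSolution (l : ℕ) (a b : ℕ → K) (v : ℕ → K[X]) : Prop where
  terminal : v l = 1
  terminal_succ : v (l + 1) = 0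
  recurrence : ∀ n < l, v n = (X - C (b n)) * v (n + 1) - C (a (n + 1)) * v (n + 2)

namespace IsTerminalSolution

variable {l : ℕ} {a b : ℕ → K} {v : ℕ → K[X]}

lemma tail (h : IsTerminalSolution (l + 1) a b v) :
    IsTerminalSolution l (fun n => a (n + 1)) (fun n => b (n + 1)) (fun n => v (n + 1)) :=
  ⟨h.terminal, h.terminal_succ, fun n hn => h.recurrence (n + 1) (by omega)⟩

lemma monic_and_natDegree_and_mem (h : IsTerminalSolution l a b v) :
    (v 0).Monic ∧ (v 0).natDegree = l ∧ v 1 ∈ degreeLT K l := by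
  induction l generalizing a b v with
  | zero =>
    rw [h.terminal, h.terminal_succ]
    exact ⟨monic_one, natDegree_one, zero_mem _⟩
  | succ l ih =>
    obtain ⟨hmonic, hdeg, hmem⟩ := ih h.tail
    have hr : C (a 1) * v 2 ∈ degreeLT K (v 1).natDegree :=
      hdeg.symm ▸ C_mul_mem_degreeLT (a 1) hmem
    rw [h.recurrence 0 l.succ_pos]
    exact ⟨monic_X_sub_C_mul_sub hmonic hr _,
      (natDegree_X_sub_C_mul_sub hmonic hr _).trans (congrArg (· + 1) hdeg),
      mem_degreeLT_of_natDegree_lt (hdeg.trans_lt l.lt_succ_self)⟩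

lemma not_isPadeDegenerate (h : IsTerminalSolution l a b v)
    (ha : ∀ n, 1 ≤ n → n ≤ l → a n ≠ 0) {c : K} (hc : c ≠ 0) :
    ∀ n ≤ l, ¬ IsPadeDegenerate (v 0) (C c * v 1) n := by
  induction l generalizing a b v c with
  | zero =>
    intro n hn
    rw [Nat.le_zero.mp hn]
    exact not_isPadeDegenerate_zero _ _
  | succ l ih =>
    rintro (_ | n) hn
    · exact not_isPadeDegenerate_zero _ _
    · obtain ⟨hmonic, hdeg, hmem⟩ := h.tail.monic_and_natDegree_and_mem
      have hr : C (a 1) * v 2 ∈ degreeLT K (v 1).natDegree :=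
        hdeg.symm ▸ C_mul_mem_degreeLT (a 1) hmem
      rw [h.recurrence 0 l.succ_pos, isPadeDegenerate_succ_iff hmonic hr hc]
      exact ih h.tail (fun k h1 hk => ha (k + 1) (by omega) (by omega))
        (ha 1 le_rfl (by omega)) n (by omega)

end IsTerminalSolution

lemma exists_euclidean_step {f g : K[X]} {l : ℕ} (hf : f.Monic) (hdeg : f.natDegree = l + 1)
    (hg : g ∈ degreeLT K (l + 1)) (hnd : ¬ IsPadeDegenerate f g 1) :
    ∃ c b f' g', c ≠ 0 ∧ f'.Monic ∧ f'.natDegree = l ∧ g' ∈ degreeLT K l ∧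
      f = (X - C b) * f' - g' ∧ g = C c * f' := by
  have hgl : g ∉ degreeLT K l := fun h =>
    hnd (isPadeDegenerate_one_of_mem_degreeLT (by rwa [hdeg, Nat.add_sub_cancel]))
  have hg0 : g ≠ 0 := fun h => hgl (h ▸ zero_mem _)
  have hgdeg : g.natDegree = l := by
    rw [mem_degreeLT, ← natDegree_lt_iff_degree_lt hg0] at hg hgl
    omega
  have hlc : g.leadingCoeff ≠ 0 := leadingCoeff_ne_zero.mpr hg0
  set f' := g * C g.leadingCoeff⁻¹ with hf'
  have hf'monic : f'.Monic := monic_mul_leadingCoeff_inv hg0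
  have hf'deg : f'.natDegree = l := by rw [hf', natDegree_mul_C (inv_ne_zero hlc), hgdeg]
  obtain ⟨b, g', hg', hfg⟩ := exists_eq_X_sub_C_mul_sub hf hf'monic (by omega)
  refine ⟨g.leadingCoeff, b, f', g', hlc, hf'monic, hf'deg, hf'deg ▸ hg', hfg, ?_⟩
  rw [hf', mul_left_comm, ← C_mul, mul_inv_cancel₀ hlc, C_1, mul_one]

lemma exists_isTerminalSolution {f g : K[X]} {l : ℕ} (hf : f.Monic) (hdeg : f.natDegree = l)
    (hg : g ∈ degreeLT K l) (hnd : ∀ n ≤ l, ¬ IsPadeDegenerate f g n) :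
    ∃ a b v, IsTerminalSolution l a b v ∧ (∀ n < l, a n ≠ 0) ∧ a l = 1 ∧
      v 0 = f ∧ C (a 0) * v 1 = g := by
  induction l generalizing f g with
  | zero =>
    have hg0 : g = 0 := by simpa [mem_degreeLT] using hg
    refine ⟨fun _ => 1, fun _ => 0, fun | 0 => 1 | _ + 1 => 0, ⟨rfl, rfl, ?_⟩, ?_, rfl,
      (hf.natDegree_eq_zero.mp hdeg).symm, ?_⟩
    · simp
    · simp
    · simp [hg0]
  | succ l ih =>
    obtain ⟨c, b₀, f', g', hc, hf', hdeg', hg', rfl, rfl⟩ :=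
      exists_euclidean_step hf hdeg hg (hnd 1 (by omega))
    have hnd' (n : ℕ) (hn : n ≤ l) : ¬ IsPadeDegenerate f' g' n := fun h =>
      hnd (n + 1) (by omega) ((isPadeDegenerate_succ_iff hf' (hdeg' ▸ hg') hc b₀ n).mpr h)
    obtain ⟨a, b, v, hv, ha, hal, rfl, rfl⟩ := ih hf' hdeg' hg' hnd'
    refine ⟨fun | 0 => c | n + 1 => a n, fun | 0 => b₀ | n + 1 => b n,
      fun | 0 => (X - C b₀) * v 0 - C (a 0) * v 1 | n + 1 => v n,
      ⟨hv.terminal, hv.terminal_succ, ?_⟩, ?_, hal, rfl, rfl⟩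
    · rintro (_ | n) hn
      · rfl
      · exact hv.recurrence n (by omega)
    · rintro (_ | n) hn
      · exact hc
      · exact ha n (by omega)

lemma exists_isTerminalSolution_iff {f g : K[X]} {l : ℕ} (hf : f.Monic)
    (hfdeg : f.natDegree = l + 1) (hg : g.Monic) (hgdeg : g.natDegree = l) :
    (∃ a b v, IsTerminalSolution (l + 1) a b v ∧ (∀ n, 1 ≤ n → n ≤ l → a n ≠ 0) ∧
      a (l + 1) = 1 ∧ v 0 = f ∧ v 1 = g) ↔ ∀ n ≤ l + 1, ¬ IsPadeDegenerate f g n := by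
  constructor
  · rintro ⟨a, b, v, hv, ha, hal, rfl, rfl⟩
    have ha' (n : ℕ) (hn1 : 1 ≤ n) (hn : n ≤ l + 1) : a n ≠ 0 := by
      rcases hn.eq_or_lt with rfl | hnl
      · exact hal ▸ one_ne_zero
      · exact ha n hn1 (by omega)
    simpa only [C_1, one_mul] using hv.not_isPadeDegenerate ha' one_ne_zero
  · intro hnd
    obtain ⟨a, b, v, hv, ha, hal, hv0, hv1⟩ := exists_isTerminalSolution hf hfdeg
      (mem_degreeLT_of_natDegree_lt (hgdeg.trans_lt l.lt_succ_self)) hnd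
    have hv1monic : (v 1).Monic := hv.tail.monic_and_natDegree_and_mem.1
    have ha0 : a 0 = 1 := by
      simpa [hg.leadingCoeff, hv1monic.leadingCoeff] using congrArg leadingCoeff hv1
    exact ⟨a, b, v, hv, fun n _ hn => ha n (by omega), hal, hv0, by simpa [ha0] using hv1⟩

lemma forall_not_isPadeDegenerate_iff_det_hankel_ne_zero {f g : K[X]} {l N : ℕ} (hf : f.Monic)
    (hfdeg : f.natDegree = l + 1) (hg : g.Monic) (hgdeg : g.natDegree = l) (hN : 2 * l + 1 ≤ N)
    {M : ℕ → K} (hM : (X ^ N * g) /ₘ f = ∑ k ∈ Finset.Icc 1 N, C (M k) * X ^ (N - k)) :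
    (∀ n ≤ l + 1, ¬ IsPadeDegenerate f g n) ↔
      ∀ n, 1 ≤ n → n ≤ l → (Matrix.of fun i j : Fin (n + 1) => M (i + j + 1)).det ≠ 0 := by
  have hdet {n : ℕ} (hn : n ≤ l) :=
    (det_hankel_eq_zero_iff_isPadeDegenerate (n := n + 1) hf (by omega) (by omega) hM).not
  constructor
  · intro hnd n _ hn
    exact (hdet hn).mpr (hnd (n + 1) (by omega))
  · intro hΔ n hn
    match n with
    | 0 => exact not_isPadeDegenerate_zero f g
    | 1 => exact not_isPadeDegenerate_one hf hg (by omega)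
    | n + 2 => exact (hdet (by omega)).mp (hΔ (n + 1) (by omega) (by omega))

lemma IsTerminalSolution.eq_and_eq_of_characteristic_eq {l : ℕ} {a b : ℕ → K} {v : ℕ → K[X]}
    (h : IsTerminalSolution l a b v) {P Q f g : K[X]} (hPQ : IsCoprime P Q)
    (hP : (l : WithBot ℕ) ≤ P.degree) (hf : f.Monic) (hfdeg : f.natDegree = l)
    (heq : P * v 1 - Q * v 0 = P * g - Q * f) : v 0 = f ∧ v 1 = g := by
  obtain ⟨hmonic, hdeg, -⟩ := h.monic_and_natDegree_and_mem
  have hdeg' : (v 0).degree = l := by rw [degree_eq_natDegree hmonic.ne_zero, hdeg]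
  have hlt : (v 0 - f).degree < (v 0).degree := by
    refine degree_sub_lt_left ?_ hmonic.ne_zero (hmonic.trans hf.symm)
    rw [hdeg', degree_eq_natDegree hf.ne_zero, hfdeg]
  exact eq_and_eq_of_mul_sub_mul_eq hPQ (hlt.trans_le (hdeg'.trans_le hP)) heq

lemma exists_characteristic_eq_iff {P Q f g E : K[X]} {l : ℕ} (hPQ : IsCoprime P Q)
    (hP : ((l + 1 : ℕ) : WithBot ℕ) ≤ P.degree) (hf : f.Monic) (hfdeg : f.natDegree = l + 1)
    (hE : E = P * g - Q * f) :
    (∃ a b : ℕ → K, (∀ n, 1 ≤ n → n ≤ l → a n ≠ 0) ∧ a (l + 1) = 1 ∧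
      ∃ v : ℕ → K[X], v (l + 1 + 1) = 0 ∧ v (l + 1) = 1 ∧
        (∀ n, 1 ≤ n → n ≤ l + 1 →
          v (n - 1) = (X - C (b n)) * v n - C (a n) * v (n + 1)) ∧
        P * v 1 - Q * v 0 = E) ↔
    ∃ a b v, IsTerminalSolution (l + 1) a b v ∧ (∀ n, 1 ≤ n → n ≤ l → a n ≠ 0) ∧
      a (l + 1) = 1 ∧ v 0 = f ∧ v 1 = g := by
  constructor
  · rintro ⟨a, b, ha, hal, v, hvs, hvt, hrec, hEv⟩
    have hv : IsTerminalSolution (l + 1) a (fun n => b (n + 1)) v :=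
      ⟨hvt, hvs, fun n hn => hrec (n + 1) (by omega) (by omega)⟩
    exact ⟨a, _, v, hv, ha, hal,
      hv.eq_and_eq_of_characteristic_eq hPQ hP hf hfdeg (hEv.trans hE)⟩
  · rintro ⟨a, b, v, hv, ha, hal, rfl, rfl⟩
    refine ⟨a, fun n => b (n - 1), ha, hal, v, hv.terminal_succ, hv.terminal,
      fun n hn1 hn => ?_, hE.symm⟩
    obtain ⟨n, rfl⟩ : ∃ m, n = m + 1 := Nat.exists_eq_add_of_le' hn1
    exact hv.recurrence n (by omega)

end InverseProblem

open InverseProblem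

theorem inverse_problem_solvability_criterion_general {K : Type*} [Field K] (l : ℕ) (hl : 1 ≤ l)
    (R0 R1 : K[X]) (hcop : IsCoprime R0 R1) (hR0d : (l : WithBot ℕ) ≤ R0.degree)
    (v0 v1 : K[X]) (hv0m : v0.Monic) (hv0d : v0.degree = (l : WithBot ℕ))
    (hv1m : v1.Monic) (hv1d : v1.degree = ((l - 1 : ℕ) : WithBot ℕ))
    (E : K[X]) (hEv : E = R0 * v1 - R1 * v0)
    (M : ℕ → K)
    (hM : (X ^ (2 * l - 1) * v1) /ₘ v0
      = ∑ k ∈ Finset.Icc 1 (2 * l - 1), C (M k) * X ^ (2 * l - 1 - k)) :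
    (∃ a b : ℕ → K, (∀ n, 1 ≤ n → n ≤ l - 1 → a n ≠ 0) ∧ a l = 1 ∧
      ∃ v : ℕ → K[X], v (l + 1) = 0 ∧ v l = 1 ∧
        (∀ n, 1 ≤ n → n ≤ l →
          v (n - 1) = (X - C (b n)) * v n - C (a n) * v (n + 1)) ∧
        R0 * v 1 - R1 * v 0 = E) ↔
    (∀ n, 1 ≤ n → n ≤ l - 1 →
      Matrix.det (Matrix.of fun i j : Fin (n + 1) => M ((i : ℕ) + (j : ℕ) + 1)) ≠ 0) := by
  obtain ⟨l, rfl⟩ : ∃ m, l = m + 1 := Nat.exists_eq_add_of_le' hl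
  rw [Nat.add_sub_cancel] at hv1d ⊢
  have hv0n : v0.natDegree = l + 1 := natDegree_eq_of_degree_eq_some hv0d
  have hv1n : v1.natDegree = l := natDegree_eq_of_degree_eq_some hv1d
  rw [exists_characteristic_eq_iff hcop hR0d hv0m hv0n hEv,
    exists_isTerminalSolution_iff hv0m hv0n hv1m hv1n,
    forall_not_isPadeDegenerate_iff_det_hankel_ne_zero hv0m hv0n hv1m hv1n (by omega) hM]

/-- Theorem 3.1: solvability criterion for the inverse problem with polynomials in the
boundary condition. Given relatively prime polynomials `R0`, `R1` (of degrees `l`, `l-1`,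
nonzero leading coefficients `r0 ≠ r1`) and complex numbers `Λ 1, …, Λ (2l-1)`, construct
`E = (r0 - r1) ∏ (X - Λ j)`, the unique monic `v0`, `v1` of degrees `l`, `l-1` with
`E = R0 v1 - R1 v0`, and the numbers `M k` as the coefficients of the quotient of
`X^{2l-1} v1` upon division by `v0`. Then `Λ 1, …, Λ (2l-1)` are the eigenvalues of the
boundary value problem for some coefficients `a`, `b` with `a n ≠ 0` (`n = 1,…,l-1`),
`a l = 1`, if and only if the Hankel determinants `Δ_n` are nonzero for `n = 1,…,l-1`. -/
theorem inverse_problem_solvability_criterion (l : ℕ) (hl : 1 ≤ l)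
    (R0 R1 : Polynomial ℂ) (r0 r1 : ℂ)
    (hcop : IsCoprime R0 R1)
    (hR0d : R0.degree = (l : WithBot ℕ)) (hR0lc : R0.leadingCoeff = r0) (hr0 : r0 ≠ 0)
    (hR1d : R1.degree = ((l - 1 : ℕ) : WithBot ℕ)) (hR1lc : R1.leadingCoeff = r1)
    (hr1 : r1 ≠ 0) (hne : r0 ≠ r1)
    (Λ : ℕ → ℂ)
    (E : Polynomial ℂ)
    (hE : E = C (r0 - r1) * ∏ j ∈ Finset.Icc 1 (2 * l - 1), (X - C (Λ j)))
    (v0 v1 : Polynomial ℂ)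
    (hv0m : v0.Monic) (hv0d : v0.degree = (l : WithBot ℕ))
    (hv1m : v1.Monic) (hv1d : v1.degree = ((l - 1 : ℕ) : WithBot ℕ))
    (hEv : E = R0 * v1 - R1 * v0)
    (M : ℕ → ℂ)
    (hM : (X ^ (2 * l - 1) * v1) /ₘ v0
      = ∑ k ∈ Finset.Icc 1 (2 * l - 1), C (M k) * X ^ (2 * l - 1 - k)) :
    (∃ a b : ℕ → ℂ, (∀ n, 1 ≤ n → n ≤ l - 1 → a n ≠ 0) ∧ a l = 1 ∧
      ∃ v : ℕ → Polynomial ℂ, v (l + 1) = 0 ∧ v l = 1 ∧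
        (∀ n, 1 ≤ n → n ≤ l →
          v (n - 1) = (X - C (b n)) * v n - C (a n) * v (n + 1)) ∧
        R0 * v 1 - R1 * v 0 = E) ↔
    (∀ n, 1 ≤ n → n ≤ l - 1 →
      Matrix.det (Matrix.of fun i j : Fin (n + 1) => M ((i : ℕ) + (j : ℕ) + 1)) ≠ 0) :=
  inverse_problem_solvability_criterion_general l hl R0 R1 hcop hR0d.ge v0 v1 hv0m hv0d hv1m hv1d
    E hEv M hM
end

section
/- (Uniqueness for the inverse problem with polynomials in the boundary condition.) Suppose (a_1,…,a_l, b_1,…,b_l) and (ã_1,…,ã_l, b̃_1,…,b̃_l) are coefficient systems with a_n ≠ 0, ã_n ≠ 0 for n = 1,…,l−1 and a_l = ã_l = 1, whose boundary value problems have the same characteristic polynomial: R_0 v_1 − R_1 v_0 = R_0 ṽ_1 − R_1 ṽ_0 (equivalently, the same 2l−1 eigenvalues counted with multiplicity). Then a_n = ã_n for n = 1,…,l−1 and b_n = b̃_n for n = 1,…,l. -/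
open Polynomial

/-!
Coprimality of `R0` and `R1` makes `R0` divide `v 0 - v' 0`. Both `v 0` and `v' 0` are monic of
degree `l`, so this difference has degree less than that of `R0` and vanishes; hence `v 0 = v' 0`
and `v 1 = v' 1`. The recurrence is a Euclidean division: dividing `v (n - 1)` by `v n` gives the
quotient `X - b n` and the remainder `-a n v (n + 1)`. Since `v (n + 1)` is monic for `n < l`, the
leading coefficient of the remainder is `-a n`, which can be divided out to recover `v (n + 1)`; so
the Euclidean algorithm started at `v 0`, `v 1` reads off all the coefficients.
-/

section

variable {K : Type*} [CommRing K]

theorem eq_and_eq_of_isCoprime_of_mul_sub_mul_eq [NoZeroDivisors K] {R S p q p' q' : K[X]}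
    (hcop : IsCoprime R S) (hdeg : (q - q').degree < R.degree)
    (h : R * p - S * q = R * p' - S * q') : p = p' ∧ q = q' := by
  have hR : R ≠ 0 := ne_zero_of_degree_gt hdeg
  have h_sub : R * (p - p') = S * (q - q') := by linear_combination h
  have hdvd : R ∣ q - q' := hcop.dvd_of_dvd_mul_left ⟨p - p', h_sub.symm⟩
  have hq : q - q' = 0 := eq_zero_of_dvd_of_degree_lt hdvd hdeg
  rw [hq, mul_zero] at h_sub
  exact ⟨sub_eq_zero.mp ((mul_eq_zero.mp h_sub).resolve_left hR), sub_eq_zero.mp hq⟩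

/-- `v` is the polynomial solution of the three-term recurrence
`a n * y (n + 1) + b n * y n + y (n - 1) = X * y n`, `1 ≤ n ≤ l`, normalised at the right end by
`v (l + 1) = 0` and `v l = 1`; `b` is the diagonal and `a` the off-diagonal of the corresponding
Jacobi matrix. The recurrence is solved for `y (n - 1)`, so that no `a n` has to be invertible;
values of `v` beyond `l + 1` are arbitrary. -/
structure IsTerminalSolution (l : ℕ) (a b : ℕ → K) (v : ℕ → K[X]) : Prop where
  apply_succ_self : v (l + 1) = 0
  apply_self : v l = 1
  recurrence : ∀ n, 1 ≤ n → n ≤ l → v (n - 1) = (X - C (b n)) * v n - C (a n) * v (n + 1)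

namespace IsTerminalSolution

variable {l n : ℕ} {a b a' b' : ℕ → K} {v v' : ℕ → K[X]}

theorem apply_eq (h : IsTerminalSolution l a b v) (hn : n < l) :
    v n = (X - C (b (n + 1))) * v (n + 1) - C (a (n + 1)) * v (n + 2) :=
  h.recurrence (n + 1) n.succ_pos hn

variable [Nontrivial K]

theorem isMonicOfDegree (h : IsTerminalSolution l a b v) (hn : n ≤ l) :
    IsMonicOfDegree (v n) (l - n) := by
  suffices IsMonicOfDegree (v n) (l - n) ∧ (v (n + 1)).natDegree ≤ l - n from this.1
  induction hn using Nat.decreasingInduction with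
  | self => simp [h.apply_self, h.apply_succ_self]
  | of_succ n hn ih =>
    obtain ⟨h_monic, h_natDegree⟩ := ih
    have h_lead : IsMonicOfDegree ((X - C (b (n + 1))) * v (n + 1)) (l - n) := by
      rw [show l - n = 1 + (l - (n + 1)) by omega]
      exact (isMonicOfDegree_X_sub_one _).mul h_monic
    have h_tail : (C (a (n + 1)) * v (n + 2)).natDegree < l - n :=
      (natDegree_C_mul_le _ _).trans_lt (h_natDegree.trans_lt (by omega))
    exact ⟨h.apply_eq hn ▸ h_lead.sub h_tail, h_monic.natDegree_eq.trans_le (by omega)⟩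

theorem degree_eq (h : IsTerminalSolution l a b v) (hn : n ≤ l) :
    (v n).degree = (l - n : ℕ) := by
  rw [degree_eq_natDegree (h.isMonicOfDegree hn).ne_zero, (h.isMonicOfDegree hn).natDegree_eq]

theorem degree_apply_zero_sub_lt (h : IsTerminalSolution l a b v)
    (h' : IsTerminalSolution l a' b' v') : (v 0 - v' 0).degree < l := by
  have h_monic := h.isMonicOfDegree l.zero_le
  have h_monic' := h'.isMonicOfDegree l.zero_le
  calc (v 0 - v' 0).degree < (v 0).degree :=
        degree_sub_lt_left ((h.degree_eq l.zero_le).trans (h'.degree_eq l.zero_le).symm)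
          h_monic.ne_zero (h_monic.leadingCoeff_eq.trans h_monic'.leadingCoeff_eq.symm)
    _ = l := h.degree_eq l.zero_le

theorem degree_succ_lt (h : IsTerminalSolution l a b v) (hn : n ≤ l) :
    (v (n + 1)).degree < (v n).degree := by
  rw [h.degree_eq hn]
  rcases hn.eq_or_lt with rfl | hn
  · simp [h.apply_succ_self]
  · rw [h.degree_eq hn]
    exact_mod_cast Nat.sub_succ_lt_self l n hn

theorem divByMonic_eq_and_modByMonic_eq (h : IsTerminalSolution l a b v) (hn : n < l) :
    v n /ₘ v (n + 1) = X - C (b (n + 1)) ∧ v n %ₘ v (n + 1) = -(C (a (n + 1)) * v (n + 2)) := by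
  refine div_modByMonic_unique _ _ (h.isMonicOfDegree hn).monic ⟨?_, ?_⟩
  · rw [h.apply_eq hn]
    ring
  · rw [degree_neg, ← smul_eq_C_mul]
    exact (degree_smul_le _ _).trans_lt (h.degree_succ_lt hn)

theorem diag_coeff_eq (h : IsTerminalSolution l a b v) (h' : IsTerminalSolution l a' b' v')
    (hn : n < l) (h_eq : v n = v' n) (h_succ : v (n + 1) = v' (n + 1)) :
    b (n + 1) = b' (n + 1) := by
  have h_quot : X - C (b (n + 1)) = X - C (b' (n + 1)) := by
    rw [← (h.divByMonic_eq_and_modByMonic_eq hn).1, h_eq, h_succ,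
      (h'.divByMonic_eq_and_modByMonic_eq hn).1]
  exact C_injective (sub_right_injective h_quot)

theorem C_mul_apply_add_two_eq (h : IsTerminalSolution l a b v) (h' : IsTerminalSolution l a' b' v')
    (hn : n < l) (h_eq : v n = v' n) (h_succ : v (n + 1) = v' (n + 1)) :
    C (a (n + 1)) * v (n + 2) = C (a' (n + 1)) * v' (n + 2) := by
  rw [← neg_inj, ← (h.divByMonic_eq_and_modByMonic_eq hn).2, h_eq, h_succ,
    (h'.divByMonic_eq_and_modByMonic_eq hn).2]

theorem offDiag_coeff_eq (h : IsTerminalSolution l a b v) (h' : IsTerminalSolution l a' b' v')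
    (hn : n + 1 < l) (h_eq : v n = v' n) (h_succ : v (n + 1) = v' (n + 1)) :
    a (n + 1) = a' (n + 1) := by
  have h_lead := congrArg leadingCoeff (h.C_mul_apply_add_two_eq h' (by omega) h_eq h_succ)
  rwa [leadingCoeff_mul_monic (h.isMonicOfDegree hn).monic, leadingCoeff_C,
    leadingCoeff_mul_monic (h'.isMonicOfDegree hn).monic, leadingCoeff_C] at h_lead

variable [NoZeroDivisors K]

theorem apply_add_two_eq (h : IsTerminalSolution l a b v) (h' : IsTerminalSolution l a' b' v')
    (hn : n + 1 < l) (ha : a (n + 1) ≠ 0) (h_eq : v n = v' n) (h_succ : v (n + 1) = v' (n + 1)) :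
    v (n + 2) = v' (n + 2) := by
  have h_rem := h.C_mul_apply_add_two_eq h' (by omega) h_eq h_succ
  rw [← h.offDiag_coeff_eq h' hn h_eq h_succ] at h_rem
  exact mul_left_cancel₀ (C_ne_zero.mpr ha) h_rem

theorem apply_eq_and_apply_succ_eq (h : IsTerminalSolution l a b v)
    (h' : IsTerminalSolution l a' b' v') (ha : ∀ n, 1 ≤ n → n < l → a n ≠ 0)
    (h_zero : v 0 = v' 0) (h_one : v 1 = v' 1) (hn : n < l) :
    v n = v' n ∧ v (n + 1) = v' (n + 1) := by
  induction n with
  | zero => exact ⟨h_zero, h_one⟩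
  | succ n ih =>
    obtain ⟨h_eq, h_succ⟩ := ih (by omega)
    exact ⟨h_succ, h.apply_add_two_eq h' hn (ha _ n.succ_pos hn) h_eq h_succ⟩

theorem coeff_eq_of_initial_eq (h : IsTerminalSolution l a b v)
    (h' : IsTerminalSolution l a' b' v') (ha : ∀ n, 1 ≤ n → n < l → a n ≠ 0)
    (h_zero : v 0 = v' 0) (h_one : v 1 = v' 1) :
    (∀ n, 1 ≤ n → n < l → a n = a' n) ∧ ∀ n, 1 ≤ n → n ≤ l → b n = b' n := by
  have h_pair {n : ℕ} (hn : n < l) := h.apply_eq_and_apply_succ_eq h' ha h_zero h_one hn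
  constructor <;> rintro (_ | n) h_pos hn
  · omega
  · exact h.offDiag_coeff_eq h' hn (h_pair (by omega)).1 (h_pair (by omega)).2
  · omega
  · exact h.diag_coeff_eq h' hn (h_pair hn).1 (h_pair hn).2

end IsTerminalSolution

theorem inverse_problem_uniqueness_general [IsDomain K] {l : ℕ} {R0 R1 : K[X]}
    {a b a' b' : ℕ → K} {v v' : ℕ → K[X]}
    (hcop : IsCoprime R0 R1) (hR0 : l ≤ R0.degree) (ha : ∀ n, 1 ≤ n → n < l → a n ≠ 0)
    (hv : IsTerminalSolution l a b v) (hv' : IsTerminalSolution l a' b' v')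
    (hsame : R0 * v 1 - R1 * v 0 = R0 * v' 1 - R1 * v' 0) :
    (∀ n, 1 ≤ n → n < l → a n = a' n) ∧ ∀ n, 1 ≤ n → n ≤ l → b n = b' n := by
  have h_degree : (v 0 - v' 0).degree < R0.degree := (hv.degree_apply_zero_sub_lt hv').trans_le hR0
  obtain ⟨h_one, h_zero⟩ := eq_and_eq_of_isCoprime_of_mul_sub_mul_eq hcop h_degree hsame
  exact hv.coeff_eq_of_initial_eq hv' ha h_zero h_one

end

/-- Uniqueness for the inverse problem with polynomials in the boundary condition: two
coefficient systems (with `a n ≠ 0`, `ã n ≠ 0` for `n = 1,…,l-1`, `a l = ã l = 1`) whose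
boundary value problems have the same characteristic polynomial `R0 v1 - R1 v0`
(equivalently the same `2l-1` eigenvalues with multiplicity) coincide. -/
theorem inverse_problem_uniqueness (l : ℕ) (hl : 1 ≤ l)
    (R0 R1 : Polynomial ℂ) (r0 r1 : ℂ)
    (hcop : IsCoprime R0 R1)
    (hR0d : R0.degree = (l : WithBot ℕ)) (hR0lc : R0.leadingCoeff = r0) (hr0 : r0 ≠ 0)
    (hR1d : R1.degree = ((l - 1 : ℕ) : WithBot ℕ)) (hR1lc : R1.leadingCoeff = r1)
    (hr1 : r1 ≠ 0) (hne : r0 ≠ r1)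
    (a b a' b' : ℕ → ℂ)
    (ha : ∀ n, 1 ≤ n → n ≤ l - 1 → a n ≠ 0) (hal : a l = 1)
    (ha' : ∀ n, 1 ≤ n → n ≤ l - 1 → a' n ≠ 0) (hal' : a' l = 1)
    (v v' : ℕ → Polynomial ℂ)
    (hvl1 : v (l + 1) = 0) (hvl : v l = 1)
    (hvrec : ∀ n, 1 ≤ n → n ≤ l →
      v (n - 1) = (X - C (b n)) * v n - C (a n) * v (n + 1))
    (hv'l1 : v' (l + 1) = 0) (hv'l : v' l = 1)
    (hv'rec : ∀ n, 1 ≤ n → n ≤ l →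
      v' (n - 1) = (X - C (b' n)) * v' n - C (a' n) * v' (n + 1))
    (hsame : R0 * v 1 - R1 * v 0 = R0 * v' 1 - R1 * v' 0) :
    (∀ n, 1 ≤ n → n ≤ l - 1 → a n = a' n) ∧ (∀ n, 1 ≤ n → n ≤ l → b n = b' n) := by
  have h := inverse_problem_uniqueness_general hcop hR0d.ge
    (fun n h_pos hn => ha n h_pos (by omega)) ⟨hvl1, hvl, hvrec⟩ ⟨hv'l1, hv'l, hv'rec⟩ hsame
  exact ⟨fun n h_pos hn => h.1 n h_pos (by omega), h.2⟩
end
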